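/- arXiv:1402.1818 — 2 statements merged into one kernel-verified Lean document; each statement's English description precedes it below -/
import Mathlib

section
/- For each subset R of ℚ ∩ (0,1), there exists a standard Borel space X with a nonatomic σ-finite Borel measure μ satisfying μ(X) = ∞, and an invertible measure-preserving transformation T : X → X, such that for all natural numbers p, q with 0 < p < q, the product transformation T^p × T^q on (X × X, μ × μ) is conservative if and only if the rational number p/q belongs to R. -/
/-!
The space is the compact group `X = ∏ j, ZMod (hgt c j)` and the transformation is `T x = x + 1`.
It is driven by a sequence of pairs `c i = (p_i, q_i)` with `0 < p_i < q_i`, in which every pair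
with `p / q ∈ R` occurs infinitely often and every ratio outside `R` only finitely often. At place
`i` four digits `0, p_i, L_i, L_i + q_i` are allowed, with `L_i = (i + 3) q_i`, and the place has
weight `hgt c i`, where `hgt c i ∣ hgt c (i + 1)` and the weights grow so fast that no carries occur.
Expansions `∑ i, d_i * hgt c i` converge in `X` and form a Cantor set, carrying the law of the sum
with independent uniform digits. Fixing the lowest digit exhibits this law as a sum of four scaled
translates of the law of the tail, and extending this relation to larger and larger windows of
integer translates gives an increasing sequence of measures (`muN`). Its limit `mu` is
`T`-invariant, nonatomic, infinite, and σ-finite since the Cantor set has measure at most `1`.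

* If `p / q ∉ R`, let `A` be the set of expansions supported on places `≥ M`, with `M` large. Were
  `A × A` to meet its image under `(T ^ p × T ^ q) ^ n` with `n > 0`, the lowest place at which a
  digit moves would exhibit two digit differences in ratio `p / q`. The ratios of digit differences
  at place `i` are `p_i / q_i`, or numbers tending to `0` or `1`, or numbers larger than `1`
  (`nonres`), so no digit moves and `n = 0`. Thus `A × A` is wandering (`not_conservative`).
* If `p / q ∈ R`, then for infinitely many `i` the digits `(0, L_i)` at place `i` of the two
  coordinates become `(p, L_i + q)` at time `hgt c i`. Since translations of the compact group of
  digit sequences act continuously in measure, such a move takes place within any set of positive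
  measure when `i` is large (`returns`), which gives recurrence (`conservative`).
-/

open MeasureTheory

/-- `T` is *conservative* w.r.t. `μ`: for every measurable set `A` of positive measure
there is a positive integer `n` with `μ (T⁻ⁿ A ∩ A) > 0`. -/
def IsConservativeMap {X : Type*} [MeasurableSpace X] (μ : Measure X) (T : X → X) : Prop :=
  ∀ A : Set X, MeasurableSet A → 0 < μ A →
    ∃ n : ℕ, 0 < n ∧ 0 < μ (T^[n] ⁻¹' A ∩ A)

namespace Odo

open Finset
open scoped ENNReal

variable (c : ℕ → ℕ × ℕ)

/-! ### Digits and weights -/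

/-- The large digit `L i`; it dwarfs `(c i).2`, by a factor tending to infinity with `i`. -/
def big (i : ℕ) : ℕ := (i + 3) * (c i).2

/-- The four digits `0, p, L, L + q` used at place `i`, where `(p, q) = c i`. -/
def dig (i : ℕ) : Fin 4 → ℕ := ![0, (c i).1, big c i, big c i + (c i).2]

/-- The radius of the window of translates used at stage `N`, a quarter of `hgt c N`. -/
def half : ℕ → ℕ
  | 0 => 1
  | N + 1 => half N * (4 * (N + 1) * (big c N + (c N).2) + 2)

/-- The weight of place `N`. -/
def hgt (N : ℕ) : ℕ := 4 * half c N

lemma half_pos (N : ℕ) : 0 < half c N := by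
  induction N with
  | zero => simp [half]
  | succ N ih => simp only [half]; positivity

lemma hgt_pos (N : ℕ) : 0 < hgt c N := by
  have := half_pos c N
  simp only [hgt]; omega

lemma hgt_succ (N : ℕ) :
    hgt c (N + 1) = hgt c N * (4 * (N + 1) * (big c N + (c N).2) + 2) := by
  simp only [hgt, half]; ring

lemma hgt_dvd {i j : ℕ} (h : i ≤ j) : hgt c i ∣ hgt c j := by
  induction j, h using Nat.le_induction with
  | base => exact dvd_rfl
  | succ j _ ih => exact ih.trans ⟨_, hgt_succ c j⟩

lemma lt_hgt (N : ℕ) : N < hgt c N := by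
  induction N with
  | zero => exact hgt_pos c 0
  | succ N ih => rw [hgt_succ]; nlinarith [Nat.zero_le (4 * (N + 1) * (big c N + (c N).2))]

lemma dig_le (i : ℕ) (a : Fin 4) (hc : (c i).1 < (c i).2) :
    dig c i a ≤ big c i + (c i).2 := by
  fin_cases a <;> simp [dig]
  omega

lemma half_succ_ge (N : ℕ) :
    half c N + (big c N + (c N).2) * hgt c N + 1 ≤ half c (N + 1) := by
  have h := half_pos c N
  simp only [half, hgt]
  have : half c N * ((N + 1) * (big c N + (c N).2)) ≥ half c N * (big c N + (c N).2) := by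
    apply Nat.mul_le_mul_left
    nlinarith [Nat.zero_le (N * (big c N + (c N).2))]
  nlinarith

lemma pow_le_half (hc : ∀ i, 0 < (c i).1 ∧ (c i).1 < (c i).2) (N : ℕ) : 8 ^ N ≤ half c N := by
  induction N with
  | zero => simp [half]
  | succ N ih =>
    simp only [half, pow_succ]
    apply Nat.mul_le_mul ih
    have h1 := hc N
    have h2 : 6 ≤ big c N := by simp only [big]; nlinarith
    nlinarith [Nat.zero_le (N * (big c N + (c N).2))]

lemma dig_injective (hc : ∀ i, 0 < (c i).1 ∧ (c i).1 < (c i).2) (i : ℕ) :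
    Function.Injective (dig c i) := by
  have h1 := hc i
  have h2 : 3 * (c i).2 ≤ big c i := by simp only [big]; nlinarith
  intro a b
  fin_cases a <;> fin_cases b <;> simp [dig] <;> omega

lemma dig_sub_cases (hc : ∀ i, 0 < (c i).1 ∧ (c i).1 < (c i).2) (i : ℕ) (a b : Fin 4) :
    a = b ∨ |(dig c i a : ℤ) - dig c i b| = (c i).1 ∨ |(dig c i a : ℤ) - dig c i b| = (c i).2 ∨
      ((big c i : ℤ) - (c i).1 ≤ |(dig c i a : ℤ) - dig c i b| ∧
        |(dig c i a : ℤ) - dig c i b| ≤ big c i + (c i).2) := by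
  have h1 := hc i
  have h2 : 3 * (c i).2 ≤ big c i := by simp only [big]; nlinarith
  fin_cases a <;> fin_cases b <;> simp [dig] <;> grind

/-- Absence of resonances: once `i` is large, the ratio `p / q` is not the ratio of two nonzero
digit differences at place `i`, unless it equals `(c i).1 / (c i).2`. Indeed the other ratios of
digit differences are close to `0`, close to `1`, or larger than `1`. -/
lemma nonres (hc : ∀ i, 0 < (c i).1 ∧ (c i).1 < (c i).2) {p q i : ℕ} (hp : 0 < p) (hpq : p < q)
    (hi : q + 2 * p ≤ i) (hne : p * (c i).2 ≠ q * (c i).1) {a a' b b' : Fin 4}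
    (h : (q : ℤ) * ((dig c i a' : ℤ) - dig c i a) = p * ((dig c i b' : ℤ) - dig c i b)) :
    a' = a ∧ b' = b := by
  have hinj := dig_injective c hc i
  have h1 := hc i
  have hL : (big c i : ℤ) = (i + 3) * (c i).2 := by simp [big]
  have hi' : (q : ℤ) + 2 * p ≤ i := by exact_mod_cast hi
  have hne' : (p : ℤ) * (c i).2 ≠ q * (c i).1 := by exact_mod_cast hne
  have hp' : (0 : ℤ) < p := by exact_mod_cast hp
  have hpq' : (p : ℤ) < q := by exact_mod_cast hpq
  have e1 : (0 : ℤ) < (c i).1 := by exact_mod_cast h1.1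
  have e2 : ((c i).1 : ℤ) < (c i).2 := by exact_mod_cast h1.2
  by_cases ha : a' = a
  · subst ha
    refine ⟨rfl, hinj ?_⟩
    have : (p : ℤ) * ((dig c i b' : ℤ) - dig c i b) = 0 := by rw [← h]; simp
    rcases mul_eq_zero.1 this with h | h <;> omega
  by_cases hb : b' = b
  · subst hb
    exfalso
    apply ha
    apply hinj
    have : (q : ℤ) * ((dig c i a' : ℤ) - dig c i a) = 0 := by rw [h]; simp
    rcases mul_eq_zero.1 this with h | h <;> omega
  exfalso
  have habs : (q : ℤ) * |(dig c i a' : ℤ) - dig c i a| = p * |(dig c i b' : ℤ) - dig c i b| := by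
    have := congrArg abs h
    rwa [abs_mul, abs_mul, Nat.abs_cast, Nat.abs_cast] at this
  have A := (dig_sub_cases c hc i a' a).resolve_left ha
  have B := (dig_sub_cases c hc i b' b).resolve_left hb
  generalize |(dig c i a' : ℤ) - dig c i a| = α at *
  generalize |(dig c i b' : ℤ) - dig c i b| = β at *
  generalize ((c i).1 : ℤ) = u at *
  generalize ((c i).2 : ℤ) = v at *
  rw [hL] at A B
  generalize (i : ℤ) = I at *
  generalize (p : ℤ) = P at *
  generalize (q : ℤ) = Q at *
  clear hinj h1 hL h
  have hI : (Q + 2 * P + 3) * v ≤ (I + 3) * v := by gcongr; linarith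
  have hPv : 0 < P * v := mul_pos hp' (by linarith)
  have hQv : 0 < Q * v := mul_pos (by linarith) (by linarith)
  have hbig : ∀ x, (I + 3) * v - u ≤ x → Q * v + 2 * (P * v) < x := by intro x hx; nlinarith
  have small : ∀ x, 0 < x → x ≤ v → (I + 3) * v - u ≤ β → Q * x = P * β → False := by
    intro x hx0 hx hy hxy
    have h1 := hbig _ hy
    have : Q * x ≤ Q * v := by gcongr; linarith
    have : 1 * β ≤ P * β := by gcongr <;> linarith
    linarith
  have small' : ∀ y, 0 < y → y ≤ v → (I + 3) * v - u ≤ α → Q * α = P * y → False := by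
    intro y hy0 hy hx hxy
    have h1 := hbig _ hx
    have : P * y ≤ P * v := by gcongr
    have : 1 * α ≤ Q * α := by gcongr <;> linarith
    linarith
  rcases A with rfl | rfl | ⟨A1, A2⟩ <;> rcases B with rfl | rfl | ⟨B1, B2⟩
  · nlinarith
  · exact hne' habs.symm
  · exact small _ e1 e2.le B1 habs
  · nlinarith
  · nlinarith
  · exact small _ (by linarith) le_rfl B1 habs
  · exact small' _ e1 e2.le A1 habs
  · exact small' _ (by linarith) le_rfl A1 habs
  · have h1 := hbig _ A1
    have : (P + 1) * α ≤ Q * α := by gcongr <;> linarith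
    have : α ≤ P * (β - α) := by linarith
    have : P * (β - α) ≤ P * (2 * v) := by gcongr; linarith
    linarith

variable {c} in
/-- The lowest place at which the digits move is visible modulo `hgt c (i + 1)`; a common
translation time `n` forces the digit differences there to be in ratio `p / q`. -/
lemma same_digit (hc : ∀ i, 0 < (c i).1 ∧ (c i).1 < (c i).2) {p q i n : ℕ} (hp : 0 < p)
    (hpq : p < q)
    (hi : q + 2 * p ≤ i) (hne : p * (c i).2 ≠ q * (c i).1) {a a' b b' : Fin 4}
    (h1 : (hgt c (i + 1) : ℤ) ∣ p * n - ((dig c i a' : ℤ) - dig c i a) * hgt c i)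
    (h2 : (hgt c (i + 1) : ℤ) ∣ q * n - ((dig c i b' : ℤ) - dig c i b) * hgt c i) :
    a' = a ∧ b' = b := by
  apply nonres c hc hp hpq hi hne
  have h3 := (h2.mul_left (p : ℤ)).sub (h1.mul_left (q : ℤ))
  have hh : (0 : ℤ) < hgt c i := by exact_mod_cast hgt_pos c i
  have h4 : (hgt c i : ℤ) * (4 * (i + 1) * (big c i + (c i).2) + 2) ∣ hgt c i *
      ((q : ℤ) * ((dig c i a' : ℤ) - dig c i a) - p * ((dig c i b' : ℤ) - dig c i b)) := by
    rw [hgt_succ] at h3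
    push_cast at h3
    refine h3.trans (dvd_of_eq ?_)
    ring
  have h5 := Int.dvd_of_mul_dvd_mul_left hh.ne' h4
  have h6 := Int.eq_zero_of_abs_lt_dvd h5 ?_
  · linarith
  have d1 : ∀ a b, |(dig c i a : ℤ) - dig c i b| ≤ big c i + (c i).2 := by
    intro a b
    have h1 := dig_le c i a (hc i).2
    have h2 := dig_le c i b (hc i).2
    rw [abs_le]; constructor <;> omega
  have hi' : (q : ℤ) + 2 * p ≤ i := by exact_mod_cast hi
  have hM : (0 : ℤ) ≤ (big c i + (c i).2 : ℤ) := by positivity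
  have hp0 : (0 : ℤ) ≤ p := by positivity
  have hq0 : (0 : ℤ) ≤ q := by positivity
  calc _ ≤ |(q : ℤ) * ((dig c i a' : ℤ) - dig c i a)| + |p * ((dig c i b' : ℤ) - dig c i b)| :=
        abs_sub _ _
    _ ≤ q * (big c i + (c i).2) + p * (big c i + (c i).2) := by
        rw [abs_mul, abs_mul, Nat.abs_cast, Nat.abs_cast]
        gcongr
        · exact d1 _ _
        · exact d1 _ _
    _ < _ := by
        generalize (big c i + (c i).2 : ℤ) = M at *
        nlinarith

/-! ### Expansions -/

instance countable_zmod (n : ℕ) : Countable (ZMod n) := by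
  cases n with
  | zero => exact inferInstanceAs (Countable ℤ)
  | succ n => exact inferInstanceAs (Countable (Fin (n + 1)))

/-- The phase space: an odometer-like compact group, on which the transformation adds `1`. -/
abbrev Sp : Type := ∀ j, ZMod (hgt c j)

/-- Sequences of digit labels. -/
abbrev Seq : Type := ℕ → Fin 4

/-- The uniform (Haar) probability measure on sequences of digit labels. -/
noncomputable def P : Measure Seq := Measure.addHaarMeasure ⊤

instance : P.IsAddLeftInvariant := by unfold P; infer_instance

instance : IsProbabilityMeasure P :=
  ⟨by simpa [P] using Measure.addHaarMeasure_self (K₀ := (⊤ : TopologicalSpace.PositiveCompacts Seq))⟩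

/-- The formal sum `∑_{i ≥ N} dig c i (ω i) * hgt c i`; it makes sense in `Sp c` because
`hgt c j` divides all its terms with `i ≥ j`. -/
def phi (N : ℕ) (ω : Seq) : Sp c :=
  fun j => ∑ i ∈ Ico N j, ((dig c i (ω i) * hgt c i : ℕ) : ZMod (hgt c j))

lemma continuous_phi (N : ℕ) : Continuous (phi c N) := by
  refine continuous_pi fun j => ?_
  refine continuous_finsetSum _ fun i _ => ?_
  exact (continuous_of_discreteTopology (f := fun a : Fin 4 =>
    ((dig c i a * hgt c i : ℕ) : ZMod (hgt c j)))).comp (continuous_apply i)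

lemma measurable_phi_add (N : ℕ) (x : Sp c) : Measurable fun ω => phi c N ω + x :=
  (continuous_phi c N).measurable.add_const x

lemma cast_hgt_mul (a i j : ℕ) (h : j ≤ i) : ((a * hgt c i : ℕ) : ZMod (hgt c j)) = 0 := by
  rw [ZMod.natCast_eq_zero_iff]
  exact (hgt_dvd c h).mul_left a

/-- Splitting off the lowest digit. -/
lemma phi_succ (N : ℕ) (ω : Seq) :
    phi c N ω = phi c (N + 1) ω + ((dig c N (ω N) * hgt c N : ℕ) : Sp c) := by
  funext j
  simp only [phi, Pi.add_apply, Pi.natCast_apply]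
  rcases Nat.lt_or_ge N j with h | h
  · rw [Finset.sum_eq_sum_Ico_succ_bot h, add_comm]
  · rw [cast_hgt_mul c _ _ _ h]
    simp [Finset.Ico_eq_empty_of_le h, Finset.Ico_eq_empty_of_le (h.trans (Nat.le_succ N))]

lemma phi_congr {N : ℕ} {ω ω' : Seq} (h : ∀ i, N ≤ i → ω i = ω' i) : phi c N ω = phi c N ω' := by
  funext j
  simp only [phi]
  refine Finset.sum_congr rfl fun i hi => ?_
  rw [h i (Finset.mem_Ico.1 hi).1]

/-- The sequence with value `k` at place `i` and `0` elsewhere. -/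
def sg (i : ℕ) (k : Fin 4) : Seq := fun j => if j = i then k else 0

lemma sg_same (i : ℕ) (k : Fin 4) : sg i k i = k := by simp [sg]

lemma sg_ne {i j : ℕ} (k : Fin 4) (h : j ≠ i) : sg i k j = 0 := by simp [sg, h]

lemma phi_succ_add_sg (i : ℕ) (ω : Seq) (k : Fin 4) :
    phi c (i + 1) (ω + sg i k) = phi c (i + 1) ω := by
  refine phi_congr c fun j hj => ?_
  rw [Pi.add_apply, sg_ne k (by omega), add_zero]

/-- Changing one digit label translates the formal sum. -/
lemma phi_add_sg (N i : ℕ) (hi : N ≤ i) (ω : Seq) (k : Fin 4) :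
    phi c N (ω + sg i k) + ((dig c i (ω i) * hgt c i : ℕ) : Sp c) =
      phi c N ω + ((dig c i (ω i + k) * hgt c i : ℕ) : Sp c) := by
  induction hd : i - N generalizing N with
  | zero =>
    obtain rfl : i = N := by omega
    rw [phi_succ, phi_succ c i ω, phi_succ_add_sg]
    simp only [Pi.add_apply, sg_same]; abel
  | succ d ih =>
    have h := ih (N + 1) (by omega) (by omega)
    rw [phi_succ, phi_succ c N ω, add_right_comm, h]
    have : N ≠ i := by omega
    simp only [Pi.add_apply, sg_ne _ this, add_zero]
    abel

/-! ### The invariant measure -/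

/-- The law of `n + ∑_{i ≥ N} dig c i (ω i) * hgt c i` for uniform `ω`, with total mass
`4 ^ (-N)`. -/
noncomputable def kap (N : ℕ) (n : ℤ) : Measure (Sp c) :=
  ((4 : ℝ≥0∞)⁻¹ ^ N) • P.map fun ω => phi c N ω + (n : Sp c)

instance (N : ℕ) (n : ℤ) : IsFiniteMeasure (kap c N n) := by
  unfold kap
  refine Measure.smul_finite _ ?_
  simp

lemma kap_apply (N : ℕ) (n : ℤ) {B : Set (Sp c)} (hB : MeasurableSet B) :
    kap c N n B = (4 : ℝ≥0∞)⁻¹ ^ N * P {ω | phi c N ω + (n : Sp c) ∈ B} := by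
  rw [kap, Measure.smul_apply, Measure.map_apply (measurable_phi_add c N _) hB]
  rfl

lemma kap_univ (N : ℕ) (n : ℤ) : kap c N n Set.univ = (4 : ℝ≥0∞)⁻¹ ^ N := by
  rw [kap_apply c N n MeasurableSet.univ]
  simp

lemma map_kap (N : ℕ) (n s : ℤ) :
    (kap c N n).map (fun x => x + (s : Sp c)) = kap c N (n + s) := by
  rw [kap, Measure.map_smul, Measure.map_map (by fun_prop) (measurable_phi_add c N _), kap]
  congr 2
  funext ω
  simp [add_assoc]

/-- Self-similarity: conditioning on the lowest digit. -/
lemma kap_succ (N : ℕ) (n : ℤ) :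
    kap c N n = ∑ a : Fin 4, kap c (N + 1) (n + (dig c N a * hgt c N : ℕ)) := by
  ext B hB
  rw [Measure.finsetSum_apply, kap_apply c N n hB]
  simp_rw [kap_apply c (N + 1) _ hB]
  rw [← Finset.mul_sum, pow_succ, mul_assoc]
  congr 1
  set D : Fin 4 → Set Seq := fun a =>
    {ω | phi c (N + 1) ω + ((n + (dig c N a * hgt c N : ℕ) : ℤ) : Sp c) ∈ B} with hD
  have hDm : ∀ a, MeasurableSet (D a) := fun a => measurable_phi_add c (N + 1) _ hB
  set E : Set Seq := {ω | phi c N ω + (n : Sp c) ∈ B} with hE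
  have hEm : MeasurableSet E := measurable_phi_add c N _ hB
  have hmem : ∀ (k : Fin 4) (ω : Seq), sg N k + ω ∈ E ↔ ω ∈ D (ω N + k) := by
    intro k ω
    simp only [hD, hE, Set.mem_ofPred_eq]
    rw [add_comm (sg N k) ω, phi_succ, phi_succ_add_sg]
    simp only [Pi.add_apply, sg_same]
    push_cast
    rw [add_assoc, add_comm (n : Sp c)]
  have h1 : ∀ k : Fin 4, P E = P ((fun ω => sg N k + ω) ⁻¹' E) := fun k =>
    (measure_preimage_add P _ E).symm
  have h2 : ∑ k : Fin 4, P ((fun ω => sg N k + ω) ⁻¹' E) = ∑ a, P (D a) := by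
    have hEk : ∀ k : Fin 4, MeasurableSet ((fun ω => sg N k + ω) ⁻¹' E) := fun k =>
      hEm.preimage (measurable_const_add _)
    have e1 : ∀ k : Fin 4, P ((fun ω => sg N k + ω) ⁻¹' E) =
        ∫⁻ ω, (D (ω N + k)).indicator 1 ω ∂P := by
      intro k
      rw [← lintegral_indicator_one (hEk k)]
      refine lintegral_congr fun ω => ?_
      classical exact if_congr (hmem k ω) rfl rfl
    have e2 : ∀ a : Fin 4, P (D a) = ∫⁻ ω, (D a).indicator 1 ω ∂P := fun a =>
      (lintegral_indicator_one (hDm a)).symm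
    have hm : ∀ k : Fin 4, Measurable fun ω : Seq => (D (ω N + k)).indicator (1 : Seq → ℝ≥0∞) ω := by
      intro k
      have : (fun ω : Seq => (D (ω N + k)).indicator (1 : Seq → ℝ≥0∞) ω) =
          ((fun ω => sg N k + ω) ⁻¹' E).indicator 1 := by
        funext ω
        classical exact if_congr (hmem k ω).symm rfl rfl
      rw [this]
      exact measurable_one.indicator (hEk k)
    simp_rw [e1, e2]
    rw [← lintegral_finsetSum _ fun k _ => hm k,
      ← lintegral_finsetSum _ fun a _ => measurable_one.indicator (hDm a)]
    refine lintegral_congr fun ω => ?_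
    exact Equiv.sum_comp (Equiv.addLeft (ω N)) fun a => (D a).indicator (1 : Seq → ℝ≥0∞) ω
  rw [← h2, Finset.sum_congr rfl fun k _ => (h1 k).symm]
  simp only [sum_const, card_univ, Fintype.card_fin, nsmul_eq_mul, Nat.cast_ofNat]
  rw [← mul_assoc, ENNReal.inv_mul_cancel (by norm_num) (by norm_num), one_mul]

/-- The approximations to the invariant measure: the window of translates `|n| ≤ half c N`. -/
noncomputable def muN (N : ℕ) : Measure (Sp c) :=
  ∑ n ∈ Icc (-(half c N : ℤ)) (half c N), kap c N n

variable {c}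

/-- A translate by at most one unit of the stage `N` approximation is part of the next one. -/
lemma map_muN_le (hc : ∀ i, 0 < (c i).1 ∧ (c i).1 < (c i).2) (N : ℕ) (s : ℤ) (hs : |s| ≤ 1) :
    (muN c N).map (fun x => x + (s : Sp c)) ≤ muN c (N + 1) := by
  have hm : Measurable fun x : Sp c => x + (s : Sp c) := by fun_prop
  have e : (muN c N).map (fun x => x + (s : Sp c)) =
      ∑ z ∈ Icc (-(half c N : ℤ)) (half c N) ×ˢ (univ : Finset (Fin 4)),
        kap c (N + 1) (z.1 + s + (dig c N z.2 * hgt c N : ℕ)) := by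
    rw [sum_product, muN, ← Measure.mapₗ_apply_of_measurable hm, map_sum]
    refine sum_congr rfl fun n _ => ?_
    rw [Measure.mapₗ_apply_of_measurable hm, map_kap, kap_succ]
  have hinj : Set.InjOn (fun z : ℤ × Fin 4 => z.1 + s + ((dig c N z.2 * hgt c N : ℕ) : ℤ))
      (Icc (-(half c N : ℤ)) (half c N) ×ˢ (univ : Finset (Fin 4)) : Finset (ℤ × Fin 4)) := by
    rintro ⟨n, a⟩ hn ⟨m, b⟩ hm' h
    simp only [coe_product, coe_Icc, coe_univ, Set.mem_prod, Set.mem_Icc, Set.mem_univ,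
      and_true] at hn hm'
    have hpos : (0 : ℤ) < half c N := by exact_mod_cast half_pos c N
    simp only [hgt] at h
    push_cast at h
    have h1 : ((dig c N a : ℤ) - dig c N b) * (4 * half c N) = m - n := by linarith
    have h2 : (dig c N a : ℤ) - dig c N b = 0 := by
      by_contra hne
      have h3 : 1 * (4 * (half c N : ℤ)) ≤ |(dig c N a : ℤ) - dig c N b| * (4 * half c N) := by
        gcongr
        exact Int.one_le_abs hne
      have h4 : |(dig c N a : ℤ) - dig c N b| * (4 * half c N) = |m - n| := by
        rw [← h1, abs_mul, abs_of_pos (by positivity : (0 : ℤ) < 4 * half c N)]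
      have h5 : |m - n| ≤ 2 * half c N := by rw [abs_le]; constructor <;> linarith
      linarith
    rw [h2] at h1
    have h6 : a = b := dig_injective c hc N (by omega)
    have h7 : n = m := by linarith
    rw [h6, h7]
  rw [e, muN, ← sum_image (f := fun n => kap c (N + 1) n) hinj]
  refine Measure.le_iff.2 fun B _ => ?_
  rw [Measure.finsetSum_apply, Measure.finsetSum_apply]
  refine sum_le_sum_of_subset ?_
  intro m hm'
  obtain ⟨⟨n, a⟩, hn, rfl⟩ := mem_image.1 hm'
  simp only [mem_product, mem_Icc, mem_univ, and_true] at hn ⊢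
  have h1 := half_succ_ge c N
  have h2 : dig c N a * hgt c N ≤ (big c N + (c N).2) * hgt c N :=
    Nat.mul_le_mul_right _ (dig_le c N a (hc N).2)
  rw [abs_le] at hs
  constructor <;> omega

lemma muN_mono (hc : ∀ i, 0 < (c i).1 ∧ (c i).1 < (c i).2) : Monotone (muN c) := by
  refine monotone_nat_of_le_succ fun N => ?_
  simpa using map_muN_le hc N 0 (by simp)

/-- The increasing limit of a sequence of measures. -/
noncomputable def limMeas {X : Type*} [MeasurableSpace X] (m : ℕ → Measure X) (hm : Monotone m) :
    Measure X :=
  Measure.ofMeasurable (fun s _ => ⨆ N, m N s) (by simp) (by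
    intro f hf hd
    simp_rw [measure_iUnion hd hf, ENNReal.tsum_eq_iSup_sum]
    rw [iSup_comm]
    refine iSup_congr fun s => ?_
    exact (ENNReal.finsetSum_iSup_of_monotone fun i N M h => hm h (f i)).symm)

lemma limMeas_apply {X : Type*} [MeasurableSpace X] (m : ℕ → Measure X) (hm : Monotone m)
    {s : Set X} (hs : MeasurableSet s) : limMeas m hm s = ⨆ N, m N s :=
  Measure.ofMeasurable_apply s hs

/-- The invariant measure, the increasing limit of the measures `muN c N`. -/
noncomputable def mu (hc : ∀ i, 0 < (c i).1 ∧ (c i).1 < (c i).2) : Measure (Sp c) :=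
  limMeas (muN c) (muN_mono hc)

lemma muN_le_mu (hc : ∀ i, 0 < (c i).1 ∧ (c i).1 < (c i).2) (N : ℕ) : muN c N ≤ mu hc := by
  refine Measure.le_iff.2 fun s hs => ?_
  rw [mu, limMeas_apply _ _ hs]
  exact le_iSup (fun N => muN c N s) N

lemma map_mu_le (hc : ∀ i, 0 < (c i).1 ∧ (c i).1 < (c i).2) (s : ℤ) (hs : |s| ≤ 1) :
    (mu hc).map (fun x => x + (s : Sp c)) ≤ mu hc := by
  have hm : Measurable fun x : Sp c => x + (s : Sp c) := by fun_prop
  refine Measure.le_iff.2 fun B hB => ?_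
  rw [Measure.map_apply hm hB, mu, limMeas_apply _ _ (hm hB)]
  refine iSup_le fun N => ?_
  rw [← Measure.map_apply hm hB]
  exact (map_muN_le hc N s hs B).trans (muN_le_mu hc (N + 1) B)

lemma map_mu_one (hc : ∀ i, 0 < (c i).1 ∧ (c i).1 < (c i).2) :
    (mu hc).map (fun x => x + 1) = mu hc := by
  apply le_antisymm
  · simpa using map_mu_le hc 1 (by simp)
  · have h := Measure.map_mono (map_mu_le hc (-1) (by simp))
      (f := fun x : Sp c => x + 1) (by fun_prop)
    rw [Measure.map_map (by fun_prop) (by fun_prop)] at h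
    have : (fun x : Sp c => x + 1) ∘ (fun x : Sp c => x + ((-1 : ℤ) : Sp c)) = id := by
      funext x; simp
    rwa [this, Measure.map_id] at h

lemma map_mu (hc : ∀ i, 0 < (c i).1 ∧ (c i).1 < (c i).2) (n : ℤ) :
    (mu hc).map (fun x => x + (n : Sp c)) = mu hc := by
  have key : ∀ s t : ℤ, (mu hc).map (fun x => x + (s : Sp c)) = mu hc →
      (mu hc).map (fun x => x + (t : Sp c)) = mu hc →
      (mu hc).map (fun x => x + ((s + t : ℤ) : Sp c)) = mu hc := by
    intro s t hs ht
    have e : (fun x : Sp c => x + ((s + t : ℤ) : Sp c)) =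
        (fun x => x + (t : Sp c)) ∘ (fun x => x + (s : Sp c)) := by
      funext x; simp [add_assoc]
    rw [e, ← Measure.map_map (by fun_prop) (by fun_prop), hs, ht]
  have h1 := map_mu_one hc
  have h2 : (mu hc).map (fun x => x + ((-1 : ℤ) : Sp c)) = mu hc := by
    conv_lhs => rw [← h1]
    rw [Measure.map_map (by fun_prop) (by fun_prop)]
    have : (fun x : Sp c => x + ((-1 : ℤ) : Sp c)) ∘ (fun x : Sp c => x + 1) = id := by
      funext x; simp
    rw [this, Measure.map_id]
  induction n using Int.induction_on with
  | zero => simp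
  | succ n ih => exact key _ 1 ih (by simpa using h1)
  | pred n ih => exact key _ (-1) ih h2

lemma kap_le_mu (hc : ∀ i, 0 < (c i).1 ∧ (c i).1 < (c i).2) (N : ℕ) (n : ℤ) :
    kap c N n ≤ mu hc := by
  have h0 : kap c N 0 ≤ mu hc := by
    refine le_trans (Measure.le_iff.2 fun B _ => ?_) (muN_le_mu hc N)
    rw [muN, Measure.finsetSum_apply]
    exact single_le_sum (f := fun n => kap c N n B) (fun _ _ => zero_le) (by simp)
  have h1 := Measure.map_mono h0 (f := fun x : Sp c => x + (n : Sp c)) (by fun_prop)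
  rwa [map_kap, zero_add, map_mu] at h1

lemma kap_le_kap_zero (N : ℕ) (n : ℤ) : kap c N n ≤ kap c 0 n := by
  induction N with
  | zero => exact le_rfl
  | succ N ih =>
    refine le_trans (Measure.le_iff.2 fun B _ => ?_) ih
    rw [kap_succ c N n, Measure.finsetSum_apply]
    have := single_le_sum (f := fun a => kap c (N + 1) (n + (dig c N a * hgt c N : ℕ)) B)
      (fun _ _ => zero_le) (mem_univ (0 : Fin 4))
    simpa [dig] using this

/-- Null sets for all integer translates of the law of `phi c 0` are null for `mu`. -/
lemma mu_absolutelyContinuous (hc : ∀ i, 0 < (c i).1 ∧ (c i).1 < (c i).2) :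
    mu hc ≪ Measure.sum fun n : ℤ => kap c 0 n := by
  refine Measure.AbsolutelyContinuous.mk fun B hB h => ?_
  rw [Measure.sum_apply_eq_zero' hB] at h
  rw [mu, limMeas_apply _ _ hB, ENNReal.iSup_eq_zero]
  intro N
  rw [muN, Measure.finsetSum_apply]
  refine sum_eq_zero fun n _ => ?_
  exact le_antisymm ((kap_le_kap_zero N n B).trans (h n).le) zero_le

lemma mu_univ (hc : ∀ i, 0 < (c i).1 ∧ (c i).1 < (c i).2) : mu hc Set.univ = ⊤ := by
  refine ENNReal.eq_top_of_forall_nnreal_le fun r => ?_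
  obtain ⟨N, hN⟩ := exists_nat_ge r
  have h1 : (N : ℝ≥0∞) ≤ muN c N Set.univ := by
    rw [muN, Measure.finsetSum_apply]
    simp only [kap_univ, sum_const, nsmul_eq_mul, Int.card_Icc]
    have h2 : 8 ^ N ≤ ((half c N : ℤ) + 1 - -(half c N : ℤ)).toNat := by
      have := pow_le_half c hc N
      omega
    calc (N : ℝ≥0∞) ≤ ((2 ^ N : ℕ) : ℝ≥0∞) := by exact_mod_cast Nat.lt_two_pow_self.le
      _ = ((8 ^ N : ℕ) : ℝ≥0∞) * 4⁻¹ ^ N := by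
        push_cast
        rw [← mul_pow]
        congr 1
        rw [show (8 : ℝ≥0∞) = 2 * 4 by norm_num, mul_assoc,
          ENNReal.mul_inv_cancel (by norm_num) (by norm_num), mul_one]
      _ ≤ _ := by gcongr
  calc (r : ℝ≥0∞) ≤ N := by exact_mod_cast hN
    _ ≤ _ := h1
    _ ≤ _ := muN_le_mu hc N _

variable (c) in
/-- The integers `∑_{i < N} dig c i (ω i) * hgt c i`. -/
def starts : ℕ → Finset ℕ
  | 0 => {0}
  | N + 1 => (starts N ×ˢ (univ : Finset (Fin 4))).image fun z => z.1 + dig c N z.2 * hgt c N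

lemma card_starts (N : ℕ) : (starts c N).card ≤ 4 ^ N := by
  induction N with
  | zero => simp [starts]
  | succ N ih =>
    rw [starts]
    refine card_image_le.trans ?_
    rw [card_product, pow_succ]
    simpa using ih

lemma sum_mem_starts (N : ℕ) (ω : Seq) :
    ∑ i ∈ range N, dig c i (ω i) * hgt c i ∈ starts c N := by
  induction N with
  | zero => simp [starts]
  | succ N ih =>
    rw [starts, sum_range_succ, mem_image]
    exact ⟨(_, ω N), mem_product.2 ⟨ih, mem_univ _⟩, rfl⟩

lemma starts_le (hc : ∀ i, 0 < (c i).1 ∧ (c i).1 < (c i).2) (N m : ℕ) (hm : m ∈ starts c N) :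
    m ≤ half c N := by
  induction N generalizing m with
  | zero => simp [starts] at hm; simp [hm]
  | succ N ih =>
    rw [starts, mem_image] at hm
    obtain ⟨⟨k, a⟩, hk, rfl⟩ := hm
    have h0 := ih k (by simpa using hk)
    have h1 := half_succ_ge c N
    have h2 : dig c N a * hgt c N ≤ (big c N + (c N).2) * hgt c N :=
      Nat.mul_le_mul_right _ (dig_le c N a (hc N).2)
    simp only
    omega

lemma measurableSet_range_phi (N : ℕ) : MeasurableSet (Set.range (phi c N)) :=
  (isCompact_range (continuous_phi c N)).measurableSet

/-- The basic Cantor set has finite measure: of the translates in the window of stage `N`, at most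
`4 ^ N` meet it. -/
lemma mu_range_le (hc : ∀ i, 0 < (c i).1 ∧ (c i).1 < (c i).2) :
    mu hc (Set.range (phi c 0)) ≤ 1 := by
  rw [mu, limMeas_apply _ _ (measurableSet_range_phi 0)]
  refine iSup_le fun N => ?_
  rw [muN, Measure.finsetSum_apply]
  set W := Icc (-(half c N : ℤ)) (half c N)
  set J : Finset ℤ := (starts c N).image (fun m : ℕ => (m : ℤ)) with hJ
  have hz : ∀ n ∈ W, n ∉ J → kap c N n (Set.range (phi c 0)) = 0 := by
    intro n hn hnJ
    rw [kap_apply c N n (measurableSet_range_phi 0)]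
    have : {ω | phi c N ω + (n : Sp c) ∈ Set.range (phi c 0)} = ∅ := by
      rw [Set.eq_empty_iff_forall_notMem]
      rintro ω ⟨ω', h⟩
      apply hnJ
      have h1 := congrFun h N
      simp only [phi, Pi.add_apply, Pi.intCast_apply, Ico_self, sum_empty, zero_add,
        ← Finset.range_eq_Ico] at h1
      set m := ∑ i ∈ range N, dig c i (ω' i) * hgt c i with hm
      have h2 : ((m : ℤ) : ZMod (hgt c N)) = (n : ZMod (hgt c N)) := by
        rw [← h1, hm]
        push_cast
        rfl
      rw [ZMod.intCast_eq_intCast_iff_dvd_sub] at h2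
      have h3 := starts_le hc N m (sum_mem_starts N ω')
      have h4 := half_pos c N
      have h5 : n - m = 0 := by
        refine Int.eq_zero_of_abs_lt_dvd h2 ?_
        simp only [W, mem_Icc] at hn
        rw [abs_lt, hgt]
        push_cast
        constructor <;> omega
      rw [hJ, mem_image]
      exact ⟨m, sum_mem_starts N ω', by omega⟩
    rw [this]; simp
  calc ∑ n ∈ W, kap c N n (Set.range (phi c 0))
      = ∑ n ∈ W with n ∈ J, kap c N n (Set.range (phi c 0)) := by
        rw [sum_filter]
        refine sum_congr rfl fun n hn => ?_
        split_ifs with h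
        · rfl
        · exact hz n hn h
    _ ≤ ∑ n ∈ J, kap c N n (Set.range (phi c 0)) :=
        sum_le_sum_of_subset fun n hn => (mem_filter.1 hn).2
    _ ≤ ∑ n ∈ J, (4 : ℝ≥0∞)⁻¹ ^ N := by
        gcongr with n
        exact (measure_mono (Set.subset_univ _)).trans (kap_univ c N n).le
    _ ≤ ((4 ^ N : ℕ) : ℝ≥0∞) * 4⁻¹ ^ N := by
        rw [sum_const, nsmul_eq_mul]
        gcongr
        exact card_image_le.trans (card_starts N)
    _ = 1 := by
        push_cast
        rw [← mul_pow, ENNReal.mul_inv_cancel (by norm_num) (by norm_num), one_pow]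

lemma sigmaFinite_mu (hc : ∀ i, 0 < (c i).1 ∧ (c i).1 < (c i).2) : SigmaFinite (mu hc) := by
  set A := Set.range (phi c 0) with hA
  have hAm : MeasurableSet A := measurableSet_range_phi 0
  set B : ℤ → Set (Sp c) := fun n => (fun x => x + (n : Sp c)) ⁻¹' A with hB
  have hBm : ∀ n, MeasurableSet (B n) := fun n => hAm.preimage (by fun_prop)
  have hU : MeasurableSet (⋃ n, B n)ᶜ := (MeasurableSet.iUnion hBm).compl
  refine Measure.sigmaFinite_of_countable (S := insert (⋃ n, B n)ᶜ (Set.range B))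
    ((Set.countable_range B).insert _) ?_ ?_
  · rintro s (rfl | ⟨n, rfl⟩)
    · have : mu hc (⋃ n, B n)ᶜ = 0 := by
        refine mu_absolutelyContinuous hc ?_
        rw [Measure.sum_apply_eq_zero' hU]
        intro n
        rw [kap_apply c 0 n hU]
        have : {ω | phi c 0 ω + (n : Sp c) ∈ (⋃ n, B n)ᶜ} = ∅ := by
          rw [Set.eq_empty_iff_forall_notMem]
          intro ω hω
          refine hω (Set.mem_iUnion.2 ⟨-n, ω, ?_⟩)
          simp
        rw [this]; simp
      rw [this]; simp
    · rw [hB]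
      simp only
      rw [← Measure.map_apply (by fun_prop) hAm, map_mu]
      exact (mu_range_le hc).trans_lt ENNReal.one_lt_top
  · rw [Set.sUnion_insert, Set.sUnion_range, Set.compl_union_self]

/-! ### Recurrence in the digit space, and absence of atoms -/

/-- Recurrence in the digit space: for a set `B` of positive measure and all large `i`, prescribed
digits at place `i` can be changed in a prescribed way without leaving `B`, on a set of positive
measure. It holds because translations of the compact group `Seq × Seq` act continuously in
measure, so that `B` is almost invariant under changes of a far away digit. -/
lemma returns {B : Set (Seq × Seq)} (hB : MeasurableSet B) (h : 0 < (P.prod P) B) :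
    ∀ᶠ i in Filter.atTop, ∀ a b k l : Fin 4,
      0 < (P.prod P) {z | z ∈ B ∧ z.1 i = a ∧ z.2 i = b ∧ z + (sg i k, sg i l) ∈ B} := by
  classical
  have hinv : (P.prod P).IsAddLeftInvariant := Measure.prod.instIsAddLeftInvariant
  set Q := P.prod P with hQ
  let F : C(Seq × Seq, C(Seq × Seq, Seq × Seq)) :=
    ContinuousMap.curry ⟨fun z => z.1 + z.2, continuous_add⟩
  have hF : ∀ g z, F g z = g + z := fun g z => rfl
  have hmp : ∀ g, MeasurePreserving (F g) Q Q := fun g => measurePreserving_add_left Q g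
  have hsg : ∀ k, Filter.Tendsto (fun i => sg i k) Filter.atTop (nhds 0) := by
    intro k
    rw [tendsto_pi_nhds]
    intro j
    refine tendsto_const_nhds.congr' ?_
    filter_upwards [Filter.eventually_gt_atTop j] with i hi
    exact (sg_ne k hi.ne).symm
  have hpos : 0 < Q B / 32 := ENNReal.div_pos h.ne' (by norm_num)
  have hfin : Q B ≠ ⊤ := measure_ne_top _ _
  have hev : ∀ kl : Fin 4 × Fin 4, ∀ᶠ i in Filter.atTop,
      Q (symmDiff (F (sg i kl.1, sg i kl.2) ⁻¹' B) B) < Q B / 32 := by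
    intro kl
    have ht : Filter.Tendsto (fun i => F (sg i kl.1, sg i kl.2)) Filter.atTop (nhds (F 0)) :=
      (F.continuous.tendsto 0).comp ((hsg kl.1).prodMk_nhds (hsg kl.2))
    have := tendsto_measure_symmDiff_preimage_nhds_zero (μ := Q) (ν := Q) ht
      (Filter.Eventually.of_forall fun i => hmp _) (hmp 0) hB.nullMeasurableSet hfin
    have h0 : (F 0) ⁻¹' B = B := by ext z; simp [hF]
    rw [h0] at this
    exact this.eventually_lt_const hpos
  filter_upwards [Filter.eventually_all.2 hev] with i hi a b k l
  set g : Fin 4 × Fin 4 → Seq × Seq := fun kl => (sg i kl.1, sg i kl.2) with hg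
  have gadd : ∀ x y, g x + g y = g (x + y) := by
    intro x y
    ext j <;> by_cases hj : j = i <;> simp [hg, sg, hj]
  have g0 : g 0 = 0 := by
    ext j <;> simp [hg, sg]
  set G : Set (Seq × Seq) := ⋂ kl, F (g kl) ⁻¹' B with hG
  have hGm : MeasurableSet G :=
    MeasurableSet.iInter fun kl => hB.preimage (F (g kl)).continuous.measurable
  have hGB : G ⊆ B := by
    intro z hz
    have := Set.mem_iInter.1 hz 0
    simpa [hF, g0] using this
  have hGpos : 0 < Q G := by
    by_contra hG0
    have hG0 : Q G = 0 := le_antisymm (not_lt.1 hG0) zero_le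
    have hsub : B ⊆ G ∪ ⋃ kl, symmDiff (F (g kl) ⁻¹' B) B := by
      intro z hz
      by_cases hzG : z ∈ G
      · exact Or.inl hzG
      · right
        simp only [hG, Set.mem_iInter, not_forall] at hzG
        obtain ⟨kl, hkl⟩ := hzG
        exact Set.mem_iUnion.2 ⟨kl, Or.inr ⟨hz, hkl⟩⟩
    have : Q B < Q B := by
      calc Q B ≤ Q G + Q (⋃ kl, symmDiff (F (g kl) ⁻¹' B) B) :=
            (measure_mono hsub).trans (measure_union_le _ _)
        _ ≤ 0 + ∑ kl, Q (symmDiff (F (g kl) ⁻¹' B) B) := by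
            rw [hG0]; gcongr; exact measure_iUnion_fintype_le _ _
        _ ≤ ∑ kl : Fin 4 × Fin 4, Q B / 32 := by
            rw [zero_add]; gcongr with kl; exact (hi kl).le
        _ = Q B / 2 := by
            simp only [sum_const, card_univ, Fintype.card_prod, Fintype.card_fin, nsmul_eq_mul]
            rw [← ENNReal.toReal_eq_toReal_iff' (by finiteness) (by finiteness)]
            simp
            ring
        _ < Q B := ENNReal.half_lt_self h.ne' hfin
    exact this.false
  have hGinv : ∀ kl z, z ∈ G → g kl + z ∈ G := by
    intro kl z hz
    refine Set.mem_iInter.2 fun kl' => ?_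
    have := Set.mem_iInter.1 hz (kl' + kl)
    rw [Set.mem_preimage, hF] at this ⊢
    rwa [← add_assoc, gadd]
  set E : Set (Seq × Seq) := G ∩ {z | z.1 i = a ∧ z.2 i = b} with hE
  have hEsub : E ⊆ {z | z ∈ B ∧ z.1 i = a ∧ z.2 i = b ∧ z + (sg i k, sg i l) ∈ B} := by
    rintro z ⟨hz, hza, hzb⟩
    refine ⟨hGB hz, hza, hzb, ?_⟩
    rw [add_comm]
    exact hGB (hGinv (k, l) z hz)
  refine lt_of_lt_of_le ?_ (measure_mono hEsub)
  by_contra hE0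
  have hE0 : Q E = 0 := le_antisymm (not_lt.1 hE0) zero_le
  have hcov : G ⊆ ⋃ kl, F (g kl) ⁻¹' E := by
    intro z hz
    refine Set.mem_iUnion.2 ⟨(a - z.1 i, b - z.2 i), hGinv _ z hz, ?_, ?_⟩
    · simp [hF, hg, sg]
    · simp [hF, hg, sg]
  refine hGpos.ne' (measure_mono_null hcov (measure_iUnion_null fun kl => ?_))
  exact (hmp (g kl)).quasiMeasurePreserving.preimage_null hE0

lemma noAtoms_mu (hc : ∀ i, 0 < (c i).1 ∧ (c i).1 < (c i).2) : NullSingletonClass (mu hc) := by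
  refine ⟨fun x => mu_absolutelyContinuous hc ?_⟩
  have hx : MeasurableSet ({x} : Set (Sp c)) := measurableSet_singleton x
  rw [Measure.sum_apply_eq_zero' hx]
  intro n
  rw [kap_apply c 0 n hx]
  set F := {ω | phi c 0 ω + (n : Sp c) ∈ ({x} : Set (Sp c))} with hF
  have hFm : MeasurableSet F := measurable_phi_add c 0 _ hx
  suffices P F = 0 by simp [this]
  by_contra hne
  have hpos : 0 < (P.prod P) (F ×ˢ F) := by
    rw [Measure.prod_prod]
    exact pos_iff_ne_zero.2 (mul_ne_zero hne hne)
  obtain ⟨i, hi⟩ := (returns (hFm.prod hFm) hpos).exists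
  obtain ⟨z, hz, hz0, -, hz'⟩ := nonempty_of_measure_ne_zero (hi 0 0 1 0).ne'
  have h1 : phi c 0 z.1 + (n : Sp c) = x := hz.1
  have h2 : phi c 0 (z.1 + sg i 1) + (n : Sp c) = x := hz'.1
  have h3 : phi c 0 (z.1 + sg i 1) = phi c 0 z.1 := add_right_cancel (h2.trans h1.symm)
  have h4 := phi_add_sg c 0 i (Nat.zero_le i) z.1 1
  rw [h3, hz0] at h4
  have h5 := congrFun (add_left_cancel h4) (i + 1)
  simp only [Pi.natCast_apply] at h5
  have h6 : ((((c i).1 * hgt c i : ℕ)) : ZMod (hgt c (i + 1))) = 0 := by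
    simpa [dig] using h5.symm
  rw [ZMod.natCast_eq_zero_iff, hgt_succ, mul_comm (c i).1] at h6
  have h7 := Nat.dvd_of_mul_dvd_mul_left (hgt_pos c i) h6
  have h8 := Nat.le_of_dvd (hc i).1 h7
  have h9 := hc i
  nlinarith [Nat.zero_le (i * (big c i + (c i).2)), Nat.zero_le (big c i)]

/-! ### The transformation -/

/-- The transformation `x ↦ x + 1`. -/
def shift (c : ℕ → ℕ × ℕ) : Sp c ≃ᵐ Sp c := MeasurableEquiv.addRight (1 : Sp c)

lemma shift_apply (x : Sp c) : shift c x = x + 1 := rfl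

lemma shift_iterate (n : ℕ) (x : Sp c) : (⇑(shift c))^[n] x = x + (n : Sp c) := by
  induction n with
  | zero => simp
  | succ n ih => rw [Function.iterate_succ_apply', ih, shift_apply]; push_cast; rw [add_assoc]

lemma prod_iterate (p q n : ℕ) (z : Sp c × Sp c) :
    (fun z : Sp c × Sp c => ((⇑(shift c))^[p] z.1, (⇑(shift c))^[q] z.2))^[n] z =
      (z.1 + ((p * n : ℕ) : Sp c), z.2 + ((q * n : ℕ) : Sp c)) := by
  have : (fun z : Sp c × Sp c => ((⇑(shift c))^[p] z.1, (⇑(shift c))^[q] z.2)) =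
      Prod.map (⇑(shift c))^[p] (⇑(shift c))^[q] := rfl
  rw [this, Prod.map_iterate, ← Function.iterate_mul, ← Function.iterate_mul]
  simp only [Prod.map, shift_iterate]

/-! ### Wandering sets and recurrence of the products -/

/-- If `p / q` is not a ratio of `c` from some place on, then `range (phi c M) ×ˢ range (phi c M)`
is a wandering set of positive measure for `M` large. -/
lemma not_conservative (hc : ∀ i, 0 < (c i).1 ∧ (c i).1 < (c i).2) {p q : ℕ} (hp : 0 < p)
    (hpq : p < q) (N : ℕ) (hne : ∀ i, N ≤ i → p * (c i).2 ≠ q * (c i).1) :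
    ¬ IsConservativeMap ((mu hc).prod (mu hc))
      (fun z : Sp c × Sp c => ((⇑(shift c))^[p] z.1, (⇑(shift c))^[q] z.2)) := by
  have := sigmaFinite_mu hc
  intro hcons
  set M := max N (q + 2 * p) with hM
  set A := Set.range (phi c M) with hA
  have hAm : MeasurableSet A := measurableSet_range_phi M
  have hApos : 0 < mu hc A := by
    refine lt_of_lt_of_le ?_ (kap_le_mu hc M 0 A)
    rw [kap_apply c M 0 hAm]
    have : {ω | phi c M ω + ((0 : ℤ) : Sp c) ∈ A} = Set.univ := by
      ext ω; simp [hA]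
    rw [this]
    simp only [measure_univ, mul_one]
    exact ENNReal.pow_pos (by simp) M
  obtain ⟨n, hn, hpos⟩ := hcons (A ×ˢ A) (hAm.prod hAm) (by
    rw [Measure.prod_prod]; exact ENNReal.mul_pos hApos.ne' hApos.ne')
  obtain ⟨⟨x, y⟩, hxy', hxy⟩ := nonempty_of_measure_ne_zero hpos.ne'
  rw [Set.mem_preimage, prod_iterate] at hxy'
  obtain ⟨⟨ω, rfl⟩, ⟨η, rfl⟩⟩ := hxy
  obtain ⟨⟨ω', hω⟩, ⟨η', hη⟩⟩ := hxy'
  simp only at hω hη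
  -- The difference of the two expansions, read modulo `hgt c j`.
  have red : ∀ (r : ℕ) (θ θ' : Seq), phi c M θ' = phi c M θ + ((r * n : ℕ) : Sp c) → ∀ j,
      (hgt c j : ℤ) ∣ (r : ℤ) * n -
        ∑ i ∈ Ico M j, ((dig c i (θ' i) : ℤ) - dig c i (θ i)) * hgt c i := by
    intro r θ θ' h j
    have h1 := congrFun h j
    simp only [phi, Pi.add_apply, Pi.natCast_apply] at h1
    rw [← ZMod.intCast_zmod_eq_zero_iff_dvd]
    push_cast
    push_cast at h1
    simp_rw [sub_mul]
    rw [sum_sub_distrib, h1]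
    ring
  have same : ∀ i, M ≤ i → ω' i = ω i ∧ η' i = η i := by
    intro i
    induction i using Nat.strong_induction_on with
    | _ i ih =>
      intro hi
      have e : ∀ θ θ' : Seq, (∀ j, j < i → M ≤ j → θ' j = θ j) →
          ∑ j ∈ Ico M (i + 1), ((dig c j (θ' j) : ℤ) - dig c j (θ j)) * hgt c j =
            ((dig c i (θ' i) : ℤ) - dig c i (θ i)) * hgt c i := by
        intro θ θ' hθ
        rw [Finset.sum_Ico_succ_top hi, sum_eq_zero, zero_add]
        intro j hj
        rw [mem_Ico] at hj
        rw [hθ j hj.2 hj.1]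
        simp
      have h1 := red p ω ω' hω (i + 1)
      have h2 := red q η η' hη (i + 1)
      rw [e _ _ fun j hj hj' => (ih j hj hj').1] at h1
      rw [e _ _ fun j hj hj' => (ih j hj hj').2] at h2
      exact same_digit hc hp hpq ((le_max_right _ _).trans hi)
        (hne i ((le_max_left _ _).trans hi)) h1 h2
  have h1 := red p ω ω' hω (p * n)
  rw [sum_eq_zero, sub_zero] at h1
  · have h2 : hgt c (p * n) ∣ p * n := by exact_mod_cast h1
    exact absurd (Nat.le_of_dvd (Nat.mul_pos hp hn) h2) (not_le.2 (lt_hgt c _))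
  · intro i hi
    rw [(same i (mem_Ico.1 hi).1).1]
    simp

/-- The digits `(0, L)` of the two coordinates at a place `i` with `c i = (p, q)` become
`(p, L + q)` at time `hgt c i`; by `returns` this happens inside every set of positive measure. -/
lemma conservative (hc : ∀ i, 0 < (c i).1 ∧ (c i).1 < (c i).2) {p q : ℕ}
    (hinf : ∃ᶠ i in Filter.atTop, c i = (p, q)) :
    IsConservativeMap ((mu hc).prod (mu hc))
      (fun z : Sp c × Sp c => ((⇑(shift c))^[p] z.1, (⇑(shift c))^[q] z.2)) := by
  have := sigmaFinite_mu hc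
  intro B hB hpos
  have hac := (mu_absolutelyContinuous hc).prod (mu_absolutelyContinuous hc)
  obtain ⟨s, t, hst⟩ : ∃ s t : ℤ, ((kap c 0 s).prod (kap c 0 t)) B ≠ 0 := by
    by_contra! h
    refine hpos.ne' (hac ?_)
    rw [Measure.prod_sum, Measure.sum_apply_eq_zero' hB]
    exact fun z => h z.1 z.2
  set Φ : Seq × Seq → Sp c × Sp c :=
    Prod.map (fun ω => phi c 0 ω + (s : Sp c)) (fun ω => phi c 0 ω + (t : Sp c)) with hΦ
  have hΦm : Measurable Φ := (measurable_phi_add c 0 _).prodMap (measurable_phi_add c 0 _)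
  have hk : (kap c 0 s).prod (kap c 0 t) = (P.prod P).map Φ := by
    simp only [kap, pow_zero, one_smul]
    exact Measure.map_prod_map P P (measurable_phi_add c 0 _) (measurable_phi_add c 0 _)
  rw [hk, Measure.map_apply hΦm hB] at hst
  obtain ⟨i, hci, hi⟩ := (hinf.and_eventually
    (returns (hB.preimage hΦm) (pos_iff_ne_zero.2 hst))).exists
  refine ⟨hgt c i, hgt_pos c i, ?_⟩
  have hle : (kap c 0 s).prod (kap c 0 t) ≤ (mu hc).prod (mu hc) :=
    Measure.prod_mono (kap_le_mu hc 0 s) (kap_le_mu hc 0 t)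
  refine lt_of_lt_of_le ?_ (hle _)
  rw [hk]
  refine lt_of_lt_of_le (lt_of_lt_of_le (hi 0 2 1 1) (measure_mono ?_))
    (Measure.le_map_apply hΦm.aemeasurable _)
  rintro ⟨ω, η⟩ ⟨hz, h0, h2, hz'⟩
  refine ⟨?_, hz⟩
  rw [Set.mem_preimage, prod_iterate]
  simp only at h0 h2
  have e1 := phi_add_sg c 0 i (Nat.zero_le i) ω 1
  have e2 := phi_add_sg c 0 i (Nat.zero_le i) η 1
  rw [h0] at e1
  rw [h2] at e2
  have f1 : phi c 0 (ω + sg i 1) = phi c 0 ω + ((p * hgt c i : ℕ) : Sp c) := by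
    have : dig c i (0 + 1) = p := by simp [dig, hci]
    rw [this] at e1
    simpa [dig] using e1
  have f2 : phi c 0 (η + sg i 1) = phi c 0 η + ((q * hgt c i : ℕ) : Sp c) := by
    have g1 : dig c i (2 + 1) = big c i + q := by
      have : (2 + 1 : Fin 4) = 3 := rfl
      rw [this]; simp [dig, hci]
    have g2 : dig c i 2 = big c i := by simp [dig]
    rw [g1, g2, add_mul, Nat.cast_add, add_comm ((big c i * hgt c i : ℕ) : Sp c),
      ← add_assoc] at e2
    exact add_right_cancel e2
  have hz'' : (phi c 0 (ω + sg i 1) + (s : Sp c), phi c 0 (η + sg i 1) + (t : Sp c)) ∈ B := hz'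
  rw [f1, f2, add_right_comm, add_right_comm (phi c 0 η)] at hz''
  exact hz''

/-! ### The choice of the pairs -/

open Classical in
/-- The sequence of pairs driving the construction: every pair `(p, q)` with `0 < p < q` and
`p / q ∈ R` occurs infinitely often, and the remaining places carry pairs `(1, i + 2)`, each of
whose ratios occurs only finitely often in this way. -/
noncomputable def pairs (R : Set ℚ) (i : ℕ) : ℕ × ℕ :=
  let z := Nat.unpair (Nat.unpair i).1
  if 0 < z.1 ∧ z.1 < z.2 ∧ (z.1 : ℚ) / z.2 ∈ R then z else (1, i + 2)

lemma pairs_pos (R : Set ℚ) (i : ℕ) : 0 < (pairs R i).1 ∧ (pairs R i).1 < (pairs R i).2 := by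
  simp only [pairs]
  split_ifs with h
  · exact ⟨h.1, h.2.1⟩
  · simp

lemma pairs_frequently (R : Set ℚ) {p q : ℕ} (hp : 0 < p) (hpq : p < q)
    (h : (p : ℚ) / q ∈ R) : ∃ᶠ i in Filter.atTop, pairs R i = (p, q) := by
  rw [Filter.frequently_atTop]
  intro N
  refine ⟨Nat.pair (Nat.pair p q) N, Nat.right_le_pair _ _, ?_⟩
  simp [pairs, hp, hpq, h]

lemma pairs_ne (R : Set ℚ) {p q : ℕ} (hp : 0 < p) (hpq : p < q) (h : (p : ℚ) / q ∉ R) (i : ℕ)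
    (hi : q ≤ i) : p * (pairs R i).2 ≠ q * (pairs R i).1 := by
  intro he
  simp only [pairs] at he
  split_ifs at he with hz
  · apply h
    convert hz.2.2 using 1
    have h1 : (q : ℚ) ≠ 0 := by
      have : q ≠ 0 := by omega
      exact_mod_cast this
    have h2 : ((Nat.unpair (Nat.unpair i).1).2 : ℚ) ≠ 0 := by
      have : (Nat.unpair (Nat.unpair i).1).2 ≠ 0 := by omega
      exact_mod_cast this
    rw [div_eq_div_iff h1 h2, mul_comm (Nat.cast _) (q : ℚ)]
    exact_mod_cast he
  · simp only at he
    nlinarith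

end Odo

theorem stmt6 (R : Set ℚ) (hR : R ⊆ {r : ℚ | 0 < r ∧ r < 1}) :
    ∃ (X : Type) (_ : MeasurableSpace X) (_ : StandardBorelSpace X)
      (μ : Measure X) (_ : NoAtoms μ) (_ : SigmaFinite μ) (T : X ≃ᵐ X),
      μ Set.univ = ⊤ ∧ MeasurePreserving T μ μ ∧
      ∀ p q : ℕ, 0 < p → p < q →
        (IsConservativeMap (μ.prod μ)
            (fun z : X × X => ((⇑T)^[p] z.1, (⇑T)^[q] z.2)) ↔
          ((p : ℚ) / (q : ℚ)) ∈ R) := by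
  have hc := Odo.pairs_pos R
  refine ⟨Odo.Sp (Odo.pairs R), inferInstance, inferInstance, Odo.mu hc, Odo.noAtoms_mu hc,
    Odo.sigmaFinite_mu hc, Odo.shift _, Odo.mu_univ hc,
    ⟨(Odo.shift _).measurable, Odo.map_mu_one hc⟩, fun p q hp hpq => ⟨fun h => ?_, fun h => ?_⟩⟩
  · by_contra hne
    exact Odo.not_conservative hc hp hpq q (Odo.pairs_ne R hp hpq hne) h
  · exact Odo.conservative hc (Odo.pairs_frequently R hp hpq h)
end

section
/- For each subset R of ℚ ∩ (0,1), there exists a standard Borel space X with a nonatomic σ-finite Borel measure μ satisfying μ(X) = ∞, and an invertible measure-preserving transformation T : X → X, such that for all natural numbers p, q with 0 < p < q: if p/q ∈ R, then both T^p × T^q and T^{−p} × T^q (where T^{−p} denotes the p-th power of the inverse of T) are conservative and ergodic on (X × X, μ × μ), and if p/q ∉ R, then T^p × T^q is not ergodic. -/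
/-!
The transformation is built from a countable group action, as in a cutting-and-stacking
construction with prescribed displacements.

Let `Om = ∏ ℤ/4` with its Haar probability `P`, and let a digit function `c k : ℤ/4 → ℤ` be given
for each `k`. The group `Gm = ⨁ ℤ/4` of finite digit changes acts on `Om × ℤ` by
`γ • (x, m) = (x + γ, m - disp c γ x)`, where `disp c γ x = ∑ k, (c k (x k + γ k) - c k (x k))`.
If no nonzero `γ` has displacement `0` (`FreeDigits`), the action has a Borel fundamental domain
`Sp c`, on which `P × count` induces a σ-finite nonatomic measure `mu c`. Since `m ↦ m + 1`
commutes with the action, it induces an invertible measure-preserving map `shiftMap` of `Sp c`.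
Write `pt c m x` for the class of `(x, m)`; thus `T ^ n (pt c m x) = pt c (m + n) x`, and changing
the digit `x k` from `i` to `j` moves the height by `c k i - c k j`.

*Positive direction* (`Good.conservative`, `Good.ergodic`). Suppose that for all `n, n'` there are
infinitely many stages `k` with digit differences `a A + n` and `a B + n'` for some common `a > 0`.
Any set of positive measure in `Om × Om` meets its translates under late digit changes, even with
the digits before the change prescribed (`eventually_digit_translate_pos`). With `n = n' = 0` this
gives a return under the `a`-th power of the translation of heights by `(A, B)`, so conservativity.
With general `n, n'` it shows that an invariant set of positive measure, which by the zero-one law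
for finite digit changes has slices covering almost all of `Om × Om`, meets every set of positive
measure.

*Negative direction* (`Separated.not_ergodic`). If from some stage on no displacements `d ≠ 0` and
`d'` satisfy `q d = p d'`, then the orbit under `T ^ p × T ^ q` of a small product cylinder at
height `0` misses a disjoint product cylinder at height `0`.

*Choice of digits.* At stage `k` the digit values are `0, a p + s, B, B + a q + t` with
`p / q ∈ R` (or `p = q = 1`) and `s, t ∈ ℤ` running through all possibilities infinitely often,
and `a` and `B` growing so fast that each stage dominates all previous ones. The pairs `(0, 1)`
and `(2, 3)` of digits give the positive direction for `p / q ∈ R`, for both signs; if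
`p' / q' < 1` is not in `R` then `q' x = p' x'` has no nontrivial solution in digit differences of
late stages, because the leading coefficients at `B`, or failing that at `a`, do not cancel
(`lt_dgt_comb`). The sets `T ^ (-(2 M i + 1)) {height 0}`, with `M i = tot R i` a bound for the
displacements of the stages before `i`, are disjoint, so the measure is infinite (`mu_dgt_univ`).
-/

open MeasureTheory

/-- `T` is *ergodic* w.r.t. `μ`: every measurable set `A` with `T⁻¹ A = A` mod `μ`
is null or conull. -/
def IsErgodicMap {X : Type*} [MeasurableSpace X] (μ : Measure X) (T : X → X) : Prop :=
  ∀ A : Set X, MeasurableSet A → μ (symmDiff (T ⁻¹' A) A) = 0 →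
    μ A = 0 ∨ μ Aᶜ = 0

namespace TowerShift

open Filter Topology

/-! ### Translates of sets of positive measure -/

/-- Zero-one law: a set invariant under a dense set of translations is null or conull. -/
theorem null_or_conull_of_dense {G : Type*} [AddCommGroup G] [TopologicalSpace G]
    [IsTopologicalAddGroup G] [SecondCountableTopology G] [MeasurableSpace G] [BorelSpace G]
    (μ : Measure G) [IsFiniteMeasure μ] [μ.InnerRegular] [μ.IsAddLeftInvariant]
    {s : Set G} (hs : MeasurableSet s) {D : Set G} (hD : Dense D)
    (hinv : ∀ g ∈ D, ∀ x, g + x ∈ s ↔ x ∈ s) : μ s = 0 ∨ μ sᶜ = 0 := by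
  have h : EventuallyConst s (ae μ) :=
    aeconst_of_dense_setOfPred_preimage_vadd_eq (M := G) hs.nullMeasurableSet
      (hD.mono fun g hg => by
        ext x
        exact hinv g hg x)
  rcases eventuallyConst_set.1 h with h | h
  · right; exact h
  · left
    have := ae_iff.1 h
    simpa using this

/-- A multiple form of the Steinhaus theorem: the intersection of any `n` small translates of a set of
positive measure has positive measure. Approximate `W` by a compact `K` and `K` by an open `O` with
`μ (O \ K) < μ K / (n + 1)`; translates of `K` by small elements remain inside `O`. -/
theorem exists_nhds_inter_translates_pos {G : Type*} [AddCommGroup G] [TopologicalSpace G]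
    [IsTopologicalAddGroup G] [T2Space G] [MeasurableSpace G] [BorelSpace G]
    (μ : Measure G) [IsFiniteMeasure μ] [μ.InnerRegular] [μ.IsAddLeftInvariant]
    {W : Set G} (hW : MeasurableSet W) (hpos : μ W ≠ 0) (n : ℕ) :
    ∃ V ∈ 𝓝 (0 : G), ∀ S : Finset G, S.card ≤ n → (∀ g ∈ S, g ∈ V) →
      μ (⋂ g ∈ S, {x | x + g ∈ W}) ≠ 0 := by
  obtain ⟨K, hKW, hK, hK0⟩ := hW.exists_lt_isCompact (μ := μ) (r := 0) (pos_iff_ne_zero.2 hpos)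
  have hKtop : μ K ≠ ⊤ := measure_ne_top _ _
  have hε : μ K / (n + 1) ≠ 0 := by
    simp [ENNReal.div_eq_zero_iff, hK0.ne']
  obtain ⟨O, hKO, hO, hμO⟩ := hK.exists_isOpen_lt_add (μ := μ) hε
  obtain ⟨V, hV, hKV⟩ := compact_open_separated_add_right hK hO hKO
  refine ⟨-V, neg_mem_nhds_zero G hV, fun S hS hSV h0 => ?_⟩
  have hKm : MeasurableSet K := hK.measurableSet
  have hKg : ∀ g, MeasurableSet {x | x + g ∈ K} := fun g => hKm.preimage (measurable_add_const g)
  have hμg : ∀ g, μ {x | x + g ∈ K} = μ K := fun g => measure_preimage_add_right μ g K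
  have hgO : ∀ g ∈ S, {x | x + g ∈ K} ⊆ O := fun g hg x hx =>
    hKV ⟨x + g, hx, -g, hSV g hg, by simp⟩
  have hdiff : ∀ g ∈ S, μ (O \ {x | x + g ∈ K}) ≤ μ K / (n + 1) := fun g hg => by
    rw [measure_sdiff (hgO g hg) (hKg g).nullMeasurableSet (measure_ne_top _ _), hμg]
    exact tsub_le_iff_left.2 hμO.le
  have hcover : O ⊆ (⋂ g ∈ S, {x | x + g ∈ W}) ∪ ⋃ g ∈ S, O \ {x | x + g ∈ K} := by
    intro x hx
    by_cases h : ∀ g ∈ S, x + g ∈ K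
    · left
      simpa using fun g hg => hKW (h g hg)
    · right
      push Not at h
      obtain ⟨g, hg, hgx⟩ := h
      simp only [Set.mem_iUnion]
      exact ⟨g, hg, hx, hgx⟩
  have h1 : μ K ≤ n * (μ K / (n + 1)) := calc
    μ K ≤ μ O := measure_mono hKO
    _ ≤ 0 + μ (⋃ g ∈ S, O \ {x | x + g ∈ K}) := by
      rw [← h0]; exact (measure_mono hcover).trans (measure_union_le _ _)
    _ ≤ ∑ g ∈ S, μ (O \ {x | x + g ∈ K}) := by
      rw [zero_add]; exact measure_biUnion_finset_le _ _
    _ ≤ ∑ g ∈ S, μ K / (n + 1) := Finset.sum_le_sum hdiff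
    _ = S.card * (μ K / (n + 1)) := by simp
    _ ≤ n * (μ K / (n + 1)) := by gcongr
  have hfin : μ K / (n + 1) ≠ ⊤ := by
    apply ENNReal.div_ne_top hKtop
    simp
  have h2 : (n : ENNReal) * (μ K / (n + 1)) < (n + 1) * (μ K / (n + 1)) := by
    rw [add_mul, one_mul]
    exact ENNReal.lt_add_right (by finiteness) hε
  rw [ENNReal.mul_div_cancel (by simp) (by finiteness)] at h2
  exact absurd h1 (not_le.2 h2)

/-- The compact group of all digit sequences. -/
abbrev Om := ℕ → ZMod 4

/-- The Haar probability measure on digit sequences. -/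
noncomputable abbrev P : Measure Om := Measure.addHaarMeasure ⊤

instance : IsProbabilityMeasure P := ⟨Measure.addHaarMeasure_self⟩

theorem tendsto_single_zero (u : ZMod 4) :
    Tendsto (fun k => (Pi.single k u : Om)) atTop (𝓝 0) := by
  rw [tendsto_pi_nhds]
  intro j
  refine tendsto_const_nhds.congr' ?_
  filter_upwards [eventually_gt_atTop j] with k hk
  simp [hk.ne]

instance : (𝓝[≠] (0 : Om)).NeBot := by
  have := tendsto_nhdsWithin_iff.2 ⟨tendsto_single_zero 1,
    Eventually.of_forall (fun k => (?_ : _ ∈ ({0}ᶜ : Set Om)))⟩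
  · exact this.neBot
  · simp [Pi.single_eq_zero_iff]
    decide

/-- For every late digit index `k`, a set `W` of positive measure contains a set of positive measure of
pairs with prescribed `k`-th digits that stay in `W` when these digits are changed as prescribed. -/
theorem eventually_digit_translate_pos {W : Set (Om × Om)} (hW : MeasurableSet W)
    (hpos : (P.prod P) W ≠ 0) :
    ∀ᶠ k in atTop, ∀ i i' u u' : ZMod 4, (P.prod P) {z | z ∈ W ∧ z.1 k = i ∧ z.2 k = i' ∧
      (z.1 + Pi.single k u, z.2 + Pi.single k u') ∈ W} ≠ 0 := by
  classical
  obtain ⟨V, hV, hVS⟩ := exists_nhds_inter_translates_pos (P.prod P) hW hpos 16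
  have hev : ∀ᶠ k in atTop, ∀ d : ZMod 4 × ZMod 4,
      ((Pi.single k d.1, Pi.single k d.2) : Om × Om) ∈ V := by
    rw [eventually_all]
    intro d
    have := (tendsto_single_zero d.1).prodMk_nhds (tendsto_single_zero d.2)
    exact this.eventually_mem hV
  filter_upwards [hev] with k hk i i' u u' h0
  let e : ZMod 4 × ZMod 4 → Om × Om := fun d => (Pi.single k d.1, Pi.single k d.2)
  have headd : ∀ a b, e (a + b) = e a + e b := fun a b => by simp [e, Pi.single_add]
  have hI := hVS (Finset.univ.image e)
    (Finset.card_image_le.trans (by simp [Fintype.card_prod, ZMod.card]))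
    (fun g hg => by obtain ⟨d, -, rfl⟩ := Finset.mem_image.1 hg; exact hk d)
  set I : Set (Om × Om) := ⋂ g ∈ Finset.univ.image e, {x | x + g ∈ W} with hIdef
  have memI : ∀ z, z ∈ I ↔ ∀ d, z + e d ∈ W := fun z =>
    ⟨fun h d => Set.mem_iInter₂.1 h (e d) (Finset.mem_image_of_mem e (Finset.mem_univ d)),
      fun h => Set.mem_iInter₂.2 fun g hg => by
        obtain ⟨d, -, rfl⟩ := Finset.mem_image.1 hg
        exact h d⟩
  have hIinv : ∀ z d, z ∈ I → z + e d ∈ I := fun z d hz => by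
    rw [memI] at hz ⊢
    intro d'
    rw [add_assoc, ← headd]
    exact hz _
  -- `I` is invariant under changes of the `k`-th digits, so its pieces with given `k`-th digits are
  -- translates of one another, and it is null if one of them is
  apply hI
  have hpiece : ∀ d : ZMod 4 × ZMod 4, (P.prod P) {z | z ∈ I ∧ z.1 k = d.1 ∧ z.2 k = d.2} = 0 := by
    intro d
    have h1 : {z | z ∈ I ∧ z.1 k = d.1 ∧ z.2 k = d.2} ⊆ (fun z => z + e ((i, i') - d)) ⁻¹'
        {z | z ∈ W ∧ z.1 k = i ∧ z.2 k = i' ∧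
          (z.1 + Pi.single k u, z.2 + Pi.single k u') ∈ W} := by
      rintro z ⟨hz, hz1, hz2⟩
      have hz' := (memI _).1 (hIinv z ((i, i') - d) hz)
      refine ⟨(memI _).1 hz _, ?_, ?_, hz' (u, u')⟩
      · simp [e, hz1]
      · simp [e, hz2]
    refine measure_mono_null h1 ?_
    rw [measure_preimage_add_right]
    exact h0
  refine measure_mono_null (t := ⋃ d : ZMod 4 × ZMod 4, {z | z ∈ I ∧ z.1 k = d.1 ∧ z.2 k = d.2})
    (fun z hz => Set.mem_iUnion.2 ⟨(z.1 k, z.2 k), hz, rfl, rfl⟩) (measure_iUnion_null hpiece)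

/-! ### The action of finite digit changes -/

/-- The countable group of finite digit changes. -/
abbrev Gm := ℕ →₀ ZMod 4

/-- Total change of the sum of digit values `∑ k, c k (x k)` when `x` is changed to `x + γ`. -/
def disp (c : ℕ → ZMod 4 → ℤ) (γ : Gm) (x : Om) : ℤ :=
  ∑ k ∈ γ.support, (c k (x k + γ k) - c k (x k))

theorem disp_eq_sum (c : ℕ → ZMod 4 → ℤ) (γ : Gm) (x : Om) {s : Finset ℕ} (hs : γ.support ⊆ s) :
    disp c γ x = ∑ k ∈ s, (c k (x k + γ k) - c k (x k)) := by
  refine Finset.sum_subset hs fun k _ hk => ?_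
  simp [Finsupp.notMem_support_iff.1 hk]

theorem disp_zero (c : ℕ → ZMod 4 → ℤ) (x : Om) : disp c 0 x = 0 := by simp [disp]

theorem disp_add (c : ℕ → ZMod 4 → ℤ) (γ γ' : Gm) (x : Om) :
    disp c (γ + γ') x = disp c γ' x + disp c γ (x + γ') := by
  classical
  rw [disp_eq_sum c (γ + γ') x (s := γ.support ∪ γ'.support) Finsupp.support_add,
    disp_eq_sum c γ' x (s := γ.support ∪ γ'.support) Finset.subset_union_right,
    disp_eq_sum c γ (x + γ') (s := γ.support ∪ γ'.support) Finset.subset_union_left,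
    ← Finset.sum_add_distrib]
  refine Finset.sum_congr rfl fun k _ => ?_
  simp only [Finsupp.add_apply, Pi.add_apply, add_comm (γ k), add_assoc]
  ring

theorem disp_single (c : ℕ → ZMod 4 → ℤ) (k : ℕ) (u : ZMod 4) (x : Om) :
    disp c (Finsupp.single k u) x = c k (x k + u) - c k (x k) := by
  rw [disp_eq_sum c _ x Finsupp.support_single_subset]
  simp

theorem measurable_disp (c : ℕ → ZMod 4 → ℤ) (γ : Gm) : Measurable (disp c γ) := by
  unfold disp
  refine Finset.measurable_sum _ fun k _ => ?_
  exact (measurable_of_countable fun u : ZMod 4 => c k (u + γ k) - c k u).comp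
    (measurable_pi_apply k)

/-- The space `Om × ℤ`, where `(x, m)` stands for the point at height `m` above `x`. The digit
function `c` is carried in the type because the action of `Gm` depends on it. -/
def Cov (_ : ℕ → ZMod 4 → ℤ) := Om × ℤ

variable {c : ℕ → ZMod 4 → ℤ}

instance : MeasurableSpace (Cov c) := inferInstanceAs (MeasurableSpace (Om × ℤ))
instance : StandardBorelSpace (Cov c) := inferInstanceAs (StandardBorelSpace (Om × ℤ))

/-- Finite digit changes act on `Om × ℤ`, lowering the height by the displacement, so that the
formal quantity `m + ∑ k, c k (x k)` is preserved. -/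
instance : AddAction Gm (Cov c) where
  vadd γ z := (z.1 + γ, z.2 - disp c γ z.1)
  zero_vadd z := by
    refine Prod.ext ?_ ?_
    · change z.1 + ((0 : Gm) : Om) = z.1
      simp
    · change z.2 - disp c 0 z.1 = z.2
      simp [disp_zero]
  add_vadd γ γ' z := by
    refine Prod.ext ?_ ?_
    · change z.1 + ((γ + γ' : Gm) : Om) = z.1 + γ' + γ
      rw [Finsupp.coe_add, add_comm (γ : Om), add_assoc]
    · change z.2 - disp c (γ + γ') z.1 = z.2 - disp c γ' z.1 - disp c γ (z.1 + γ')
      rw [disp_add]; ring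

/-- The pair `(x, m)` as an element of `Cov c`. -/
def mkc (c : ℕ → ZMod 4 → ℤ) (x : Om) (m : ℤ) : Cov c := (x, m)

theorem vadd_mkc (γ : Gm) (x : Om) (m : ℤ) :
    γ +ᵥ mkc c x m = mkc c (x + γ) (m - disp c γ x) := rfl

/-- The product of Haar measure and counting measure. -/
noncomputable def nu (c : ℕ → ZMod 4 → ℤ) : Measure (Cov c) :=
  (P.prod (Measure.count : Measure ℤ) : Measure (Om × ℤ))

instance : SigmaFinite (nu c) :=
  inferInstanceAs (SigmaFinite (P.prod (Measure.count : Measure ℤ)))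
instance : NullSingletonClass (nu c) :=
  inferInstanceAs (NullSingletonClass (P.prod (Measure.count : Measure ℤ)))

theorem measurePreserving_vadd_cov (γ : Gm) :
    MeasurePreserving (fun z : Cov c => γ +ᵥ z) (nu c) (nu c) := by
  refine MeasurePreserving.skew_product (f := fun x : Om => x + γ)
    (g := fun x (m : ℤ) => m - disp c γ x)
    (μa := P) (μb := P) (μc := (Measure.count : Measure ℤ)) (μd := (Measure.count : Measure ℤ))
    (measurePreserving_add_right P (γ : Om)) ?_ ?_
  · exact measurable_snd.sub ((measurable_disp c γ).comp measurable_fst)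
  · refine Eventually.of_forall fun x => ?_
    simpa [sub_eq_add_neg] using
      (measurePreserving_add_right (Measure.count : Measure ℤ) (-disp c γ x)).map_eq

instance : MeasurableConstVAdd Gm (Cov c) := ⟨fun γ => (measurePreserving_vadd_cov γ).measurable⟩

instance : VAddInvariantMeasure Gm (Cov c) (nu c) :=
  ⟨fun γ _ hs => (measurePreserving_vadd_cov γ).measure_preimage hs.nullMeasurableSet⟩

/-- Translation of heights by `n`. -/
def up (n : ℤ) (z : Cov c) : Cov c := (z.1, z.2 + n)

theorem up_mkc (n : ℤ) (x : Om) (m : ℤ) : up n (mkc c x m) = mkc c x (m + n) := rfl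

theorem measurePreserving_up (n : ℤ) : MeasurePreserving (up n : Cov c → Cov c) (nu c) (nu c) :=
  (MeasurePreserving.id P).prod (measurePreserving_add_right (Measure.count : Measure ℤ) n)

theorem up_vadd (n : ℤ) (γ : Gm) (z : Cov c) : up n (γ +ᵥ z) = γ +ᵥ up n z :=
  Prod.ext rfl (by change z.2 - disp c γ z.1 + n = z.2 + n - disp c γ z.1; ring)

theorem up_up (n n' : ℤ) (z : Cov c) : up n (up n' z) = up (n' + n) z :=
  Prod.ext rfl (add_assoc _ _ _)

theorem up_zero (z : Cov c) : up 0 z = z := Prod.ext rfl (add_zero _)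

/-- Nonzero finite digit changes have nonzero displacements. -/
def FreeDigits (c : ℕ → ZMod 4 → ℤ) : Prop := ∀ γ x, disp c γ x = 0 → γ = 0

/-- A Borel fundamental domain for the action of `Gm`: the points whose height comes first, in a
fixed enumeration of `ℤ`, among the heights occurring in their orbit. Under `FreeDigits` the heights
along an orbit are distinct, so that each orbit has exactly one such point. -/
def dom (c : ℕ → ZMod 4 → ℤ) : Set (Cov c) :=
  {z | ∀ γ : Gm, Encodable.encode z.2 ≤ Encodable.encode (γ +ᵥ z).2}

theorem measurable_height : Measurable (fun z : Cov c => z.2) := measurable_snd (α := Om) (β := ℤ)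

theorem measurableSet_dom : MeasurableSet (dom c) := by
  have : dom c = ⋂ γ : Gm, {z | Encodable.encode z.2 ≤ Encodable.encode (γ +ᵥ z).2} := by
    ext z; simp [dom]
  rw [this]
  refine MeasurableSet.iInter fun γ => measurableSet_le ?_ ?_
  · exact (measurable_of_countable _).comp measurable_height
  · exact (measurable_of_countable _).comp (measurable_height.comp (measurable_const_vadd γ))

theorem exists_vadd_mem_dom (z : Cov c) : ∃ γ : Gm, γ +ᵥ z ∈ dom c := by
  obtain ⟨γ, hγ⟩ := WellFounded.has_min
    (measure fun γ : Gm => Encodable.encode (γ +ᵥ z).2).wf Set.univ ⟨0, trivial⟩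
  refine ⟨γ, fun γ' => ?_⟩
  rw [vadd_vadd]
  exact not_lt.1 (hγ.2 (γ' + γ) trivial)

theorem vadd_eq_zero_of_mem_dom (hc : FreeDigits c) {z : Cov c} {γ : Gm} (h : z ∈ dom c)
    (h' : γ +ᵥ z ∈ dom c) : γ = 0 := by
  have h1 := h γ
  have h2 := h' (-γ)
  rw [neg_vadd_vadd] at h2
  have h3 : z.2 = z.2 - disp c γ z.1 := Encodable.encode_injective (le_antisymm h1 h2)
  exact hc γ z.1 (by omega)

/-! ### The orbit space and the transformation -/

theorem isAddFundamentalDomain_dom (hc : FreeDigits c) :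
    IsAddFundamentalDomain Gm (dom c) (nu c) where
  nullMeasurableSet := measurableSet_dom.nullMeasurableSet
  ae_covers := Eventually.of_forall exists_vadd_mem_dom
  aedisjoint := by
    intro γ γ' hne
    refine Disjoint.aedisjoint (Set.disjoint_left.2 ?_)
    rintro _ ⟨z, hz, rfl⟩ ⟨z', hz', h⟩
    apply hne
    have h1 : z' = (-γ' + γ) +ᵥ z := by
      rw [add_vadd]
      exact eq_neg_vadd_iff.2 h
    have := vadd_eq_zero_of_mem_dom hc hz (h1 ▸ hz')
    rw [neg_add_eq_zero] at this
    exact this.symm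

/-- The underlying space of the transformation: the orbit space of `Gm` acting on `Om × ℤ`, realised
as the fundamental domain `dom c`. -/
abbrev Sp (c : ℕ → ZMod 4 → ℤ) : Type := dom c

/-- The projection of `Om × ℤ` onto the orbit space, sending a point to the representative of its
orbit. -/
noncomputable def proj (z : Cov c) : Sp c :=
  ⟨(exists_vadd_mem_dom z).choose +ᵥ z, (exists_vadd_mem_dom z).choose_spec⟩

theorem proj_eq_iff (hc : FreeDigits c) (z : Cov c) (u : Sp c) :
    proj z = u ↔ ∃ γ : Gm, γ +ᵥ z = u := by
  constructor
  · rintro rfl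
    exact ⟨_, rfl⟩
  · rintro ⟨γ, hγ⟩
    apply Subtype.ext
    rw [← hγ]
    have h0 := (exists_vadd_mem_dom z).choose_spec
    change (exists_vadd_mem_dom z).choose +ᵥ z = γ +ᵥ z
    set γ₀ := (exists_vadd_mem_dom z).choose
    have h1 : (γ₀ - γ) +ᵥ (γ +ᵥ z) = γ₀ +ᵥ z := by rw [vadd_vadd, sub_add_cancel]
    have h2 := vadd_eq_zero_of_mem_dom hc (z := γ +ᵥ z) (γ := γ₀ - γ) (hγ ▸ u.2) (h1 ▸ h0)
    rw [sub_eq_zero.1 h2]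

theorem proj_val (hc : FreeDigits c) (u : Sp c) : proj (u : Cov c) = u :=
  (proj_eq_iff hc _ _).2 ⟨0, zero_vadd _ _⟩

theorem proj_vadd (hc : FreeDigits c) (γ : Gm) (z : Cov c) : proj (γ +ᵥ z) = proj z := by
  rw [proj_eq_iff hc]
  obtain ⟨γ', h⟩ := (proj_eq_iff hc z (proj z)).1 rfl
  exact ⟨γ' - γ, by rw [vadd_vadd, sub_add_cancel, h]⟩

theorem proj_eq_proj_iff (hc : FreeDigits c) (z z' : Cov c) :
    proj z = proj z' ↔ ∃ γ : Gm, γ +ᵥ z = z' := by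
  constructor
  · intro h
    obtain ⟨γ, hγ⟩ := (proj_eq_iff hc z (proj z')).1 h
    obtain ⟨γ', hγ'⟩ := (proj_eq_iff hc z' (proj z')).1 rfl
    refine ⟨-γ' + γ, ?_⟩
    rw [add_vadd, hγ, ← hγ', neg_vadd_vadd]
  · rintro ⟨γ, rfl⟩
    rw [proj_vadd hc]

theorem preimage_proj (hc : FreeDigits c) (B : Set (Sp c)) :
    proj ⁻¹' B = ⋃ γ : Gm, (fun z => γ +ᵥ z) ⁻¹' (Subtype.val '' B) := by
  ext z
  simp only [Set.mem_preimage, Set.mem_iUnion, Set.mem_image]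
  constructor
  · intro h
    obtain ⟨γ, hγ⟩ := (proj_eq_iff hc z (proj z)).1 rfl
    exact ⟨γ, _, h, hγ.symm⟩
  · rintro ⟨γ, u, hu, h⟩
    rwa [(proj_eq_iff hc z u).2 ⟨γ, h.symm⟩]

theorem measurable_proj (hc : FreeDigits c) : Measurable (proj : Cov c → Sp c) := by
  intro B hB
  rw [preimage_proj hc]
  exact MeasurableSet.iUnion fun γ =>
    (measurableSet_dom.subtype_image hB).preimage (measurable_const_vadd γ)

theorem proj_up_proj (hc : FreeDigits c) (n : ℤ) (z : Cov c) :
    proj (up n (proj z : Cov c)) = proj (up n z) := by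
  obtain ⟨γ, h⟩ := (proj_eq_iff hc z (proj z)).1 rfl
  rw [← h, up_vadd, proj_vadd hc]

/-- The restriction of the measure on `Om × ℤ` to the fundamental domain. -/
noncomputable def mu (c : ℕ → ZMod 4 → ℤ) : Measure (Sp c) := (nu c).comap Subtype.val

theorem mu_apply (B : Set (Sp c)) : mu c B = nu c (Subtype.val '' B) :=
  comap_subtype_coe_apply measurableSet_dom _ _

instance : SigmaFinite (mu c) := by
  refine SigmaFinite.of_map (mu c) (f := Subtype.val) measurable_subtype_coe.aemeasurable ?_
  rw [mu, map_comap_subtype_coe measurableSet_dom]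
  infer_instance

instance : NullSingletonClass (mu c) := ⟨fun u => by rw [mu_apply]; simp⟩

/-- The transformation of the orbit space induced by `(x, m) ↦ (x, m + 1)`. -/
noncomputable def shiftMap (hc : FreeDigits c) : Sp c ≃ᵐ Sp c where
  toFun u := proj (up 1 (u : Cov c))
  invFun u := proj (up (-1) (u : Cov c))
  left_inv u := by
    dsimp only
    rw [proj_up_proj hc, up_up]
    simp [up_zero, proj_val hc]
  right_inv u := by
    dsimp only
    rw [proj_up_proj hc, up_up]
    simp [up_zero, proj_val hc]
  measurable_toFun :=
    (measurable_proj hc).comp ((measurePreserving_up 1).measurable.comp measurable_subtype_coe)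
  measurable_invFun :=
    (measurable_proj hc).comp ((measurePreserving_up (-1)).measurable.comp measurable_subtype_coe)

theorem shiftMap_iterate_proj (hc : FreeDigits c) (n : ℕ) (x : Om) (m : ℤ) :
    (shiftMap hc)^[n] (proj (mkc c x m)) = proj (mkc c x (m + n)) := by
  induction n generalizing m with
  | zero => simp
  | succ n ih =>
    rw [Function.iterate_succ_apply]
    change (shiftMap hc)^[n] (proj (up 1 (proj (mkc c x m) : Cov c))) = _
    rw [proj_up_proj hc, up_mkc, ih]
    congr 2
    push_cast
    ring

theorem shiftMap_symm_iterate_proj (hc : FreeDigits c) (n : ℕ) (x : Om) (m : ℤ) :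
    (shiftMap hc).symm^[n] (proj (mkc c x m)) = proj (mkc c x (m - n)) := by
  induction n generalizing m with
  | zero => simp
  | succ n ih =>
    rw [Function.iterate_succ_apply]
    change (shiftMap hc).symm^[n] (proj (up (-1) (proj (mkc c x m) : Cov c))) = _
    rw [proj_up_proj hc, up_mkc, ih]
    congr 2
    push_cast
    ring

theorem mu_apply' (hc : FreeDigits c) (B : Set (Sp c)) : mu c B = nu c (proj ⁻¹' B ∩ dom c) := by
  rw [mu_apply]
  congr 1
  ext z
  constructor
  · rintro ⟨u, hu, rfl⟩
    exact ⟨by rwa [Set.mem_preimage, proj_val hc], u.2⟩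
  · rintro ⟨h1, h2⟩
    refine ⟨⟨z, h2⟩, ?_, rfl⟩
    rw [Set.mem_preimage] at h1
    rwa [← proj_val hc ⟨z, h2⟩]

theorem measurePreserving_shiftMap (hc : FreeDigits c) :
    MeasurePreserving (shiftMap hc) (mu c) (mu c) := by
  refine ⟨(shiftMap hc).measurable, Measure.ext fun B hB => ?_⟩
  rw [Measure.map_apply (shiftMap hc).measurable hB, mu_apply' hc, mu_apply' hc]
  have hm : MeasurableSet (proj ⁻¹' B) := measurable_proj hc hB
  have hup : ∀ z : Cov c, up 1 (up (-1) z) = z := fun z => by rw [up_up]; exact up_zero z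
  have hup' : ∀ z : Cov c, up (-1) (up 1 z) = z := fun z => by rw [up_up]; exact up_zero z
  -- translating by one turns the fundamental domain into another fundamental domain
  have hfd : IsAddFundamentalDomain Gm (up (-1) ⁻¹' dom c) (nu c) := by
    refine (isAddFundamentalDomain_dom hc).preimage_of_equiv (f := up (-1)) (e := id)
      (measurePreserving_up (-1)).quasiMeasurePreserving Function.bijective_id ?_
    intro γ z
    exact up_vadd _ _ _
  have h1 : proj ⁻¹' (shiftMap hc ⁻¹' B) ∩ dom c = up 1 ⁻¹' (proj ⁻¹' B ∩ up (-1) ⁻¹' dom c) := by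
    ext z
    simp only [Set.mem_inter_iff, Set.mem_preimage, hup']
    change proj (up 1 (proj z : Cov c)) ∈ B ∧ _ ↔ _
    rw [proj_up_proj hc]
  rw [h1, (measurePreserving_up 1).measure_preimage]
  · refine hfd.measure_set_eq (isAddFundamentalDomain_dom hc) hm fun γ => ?_
    ext z
    simp only [Set.mem_preimage, proj_vadd hc]
  · exact (hm.inter (measurableSet_dom.preimage
      (measurePreserving_up (-1)).measurable)).nullMeasurableSet

/-! ### Slices at fixed heights -/

/-- The orbit of `(x, m)`. -/
noncomputable def pt (c : ℕ → ZMod 4 → ℤ) (m : ℤ) (x : Om) : Sp c := proj (mkc c x m)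

theorem measurable_pt (hc : FreeDigits c) (m : ℤ) : Measurable (pt c m) :=
  (measurable_proj hc).comp (measurable_id.prodMk measurable_const : Measurable fun x : Om => (x, m))

theorem pt_add_single (hc : FreeDigits c) (m : ℤ) (x : Om) (k : ℕ) (u : ZMod 4) :
    pt c m x = pt c (m - (c k (x k + u) - c k (x k))) (x + Pi.single k u) := by
  unfold pt
  rw [← proj_vadd hc (Finsupp.single k u), vadd_mkc, disp_single, Finsupp.single_eq_pi_single]

theorem pt_eq_pt_iff (hc : FreeDigits c) (m m' : ℤ) (x x' : Om) :
    pt c m x = pt c m' x' ↔ ∃ γ : Gm, x' = x + γ ∧ m' = m - disp c γ x := by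
  unfold pt
  rw [proj_eq_proj_iff hc]
  refine exists_congr fun γ => ?_
  rw [vadd_mkc, eq_comm]
  exact Prod.mk_inj

theorem exists_pt (hc : FreeDigits c) (u : Sp c) : ∃ m x, pt c m x = u :=
  ⟨(u : Cov c).2, (u : Cov c).1, proj_val hc u⟩

theorem nu_prod_singleton (S : Set Om) (m : ℤ) :
    nu c (S ×ˢ ({m} : Set ℤ) : Set (Om × ℤ)) = P S := by
  have := Measure.prod_prod (μ := P) (ν := (Measure.count : Measure ℤ)) S {m}
  rw [Measure.count_singleton, mul_one] at this
  exact this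

theorem quasiMeasurePreserving_pt (hc : FreeDigits c) (m : ℤ) :
    Measure.QuasiMeasurePreserving (pt c m) P (mu c) := by
  refine ⟨measurable_pt hc m, Measure.AbsolutelyContinuous.mk fun B hB h0 => ?_⟩
  rw [Measure.map_apply (measurable_pt hc m) hB]
  have h1 : nu c (proj ⁻¹' B) = 0 := by
    rw [preimage_proj hc]
    refine measure_iUnion_null fun γ => ?_
    rw [measure_preimage_vadd, ← mu_apply, h0]
  rw [← nu_prod_singleton (c := c) _ m]
  refine measure_mono_null ?_ h1
  rintro ⟨x, m'⟩ ⟨hx, hm⟩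
  obtain rfl : m' = m := hm
  exact hx

/-- Every point of the orbit space is `pt c m x` for some height `m`, so `mu c` is at most the sum of
the images of `P` over all heights. -/
theorem mu_le_sum (hc : FreeDigits c) : mu c ≤ Measure.sum fun m : ℤ => P.map (pt c m) := by
  refine Measure.le_iff.2 fun B hB => ?_
  rw [Measure.sum_apply _ hB, mu_apply]
  have hsub : (Subtype.val '' B : Set (Cov c)) ⊆
      ⋃ m : ℤ, ((pt c m ⁻¹' B) ×ˢ ({m} : Set ℤ) : Set (Om × ℤ)) := by
    rintro _ ⟨u, hu, rfl⟩
    refine Set.mem_iUnion.2 ⟨(u : Cov c).2, ?_, rfl⟩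
    change proj (u : Cov c) ∈ B
    rwa [proj_val hc]
  calc nu c (Subtype.val '' B) ≤ _ := measure_mono hsub
    _ ≤ ∑' m : ℤ, nu c ((pt c m ⁻¹' B) ×ˢ ({m} : Set ℤ) : Set (Om × ℤ)) := measure_iUnion_le _
    _ = ∑' m : ℤ, (P.map (pt c m)) B := by
      congr 1
      ext m
      rw [nu_prod_singleton, Measure.map_apply (measurable_pt hc m) hB]

/-- The part of `F` in the copy of `Om × Om` at heights `m, m'`. -/
def slice (F : Set (Sp c × Sp c)) (m m' : ℤ) : Set (Om × Om) :=
  {w | (pt c m w.1, pt c m' w.2) ∈ F}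

theorem measurableSet_slice (hc : FreeDigits c) {F : Set (Sp c × Sp c)} (hF : MeasurableSet F)
    (m m' : ℤ) : MeasurableSet (slice F m m') :=
  hF.preimage ((measurable_pt hc m).prodMap (measurable_pt hc m'))

theorem slice_null (hc : FreeDigits c) {F : Set (Sp c × Sp c)}
    (h : ((mu c).prod (mu c)) F = 0) (m m' : ℤ) : (P.prod P) (slice F m m') = 0 :=
  (QuasiMeasurePreserving.prodMap (quasiMeasurePreserving_pt hc m)
    (quasiMeasurePreserving_pt hc m')).preimage_null h

theorem exists_slice_ne_zero (hc : FreeDigits c) {F : Set (Sp c × Sp c)} (hF : MeasurableSet F)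
    (h : ((mu c).prod (mu c)) F ≠ 0) : ∃ m m', (P.prod P) (slice F m m') ≠ 0 := by
  contrapose! h
  have h1 := Measure.prod_mono (mu_le_sum hc) (mu_le_sum hc)
  refine le_antisymm ((h1 F).trans ?_) zero_le
  rw [Measure.prod_sum, Measure.sum_apply _ hF]
  refine le_of_eq (ENNReal.tsum_eq_zero.2 fun mm => ?_)
  rw [Measure.map_prod_map _ _ (measurable_pt hc _) (measurable_pt hc _),
    Measure.map_apply ((measurable_pt hc _).prodMap (measurable_pt hc _)) hF]
  exact h mm.1 mm.2

/-! ### Conservativity and ergodicity of products -/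

/-- For each perturbation `(n, n')`, the pairs `(a A + n, a B + n')` with `a > 0` are realised by
digit differences at infinitely many stages. -/
def Good (c : ℕ → ZMod 4 → ℤ) (A B : ℤ) : Prop :=
  ∀ n n' : ℤ, ∃ᶠ k in atTop, ∃ (a : ℕ) (i j i' j' : ZMod 4), 0 < a ∧
    c k j - c k i = a * A + n ∧ c k j' - c k i' = a * B + n'

/-- A positive part of `W`, whose points lie in `F` when put at heights `m, m'`, also lies in `F` when
put at heights lower by `a A + n` and `a B + n'`, for some `a > 0`. -/
theorem Good.transfer (hc : FreeDigits c) {A B : ℤ} (hg : Good c A B) {F : Set (Sp c × Sp c)}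
    {m m' : ℤ} {W : Set (Om × Om)} (hW : MeasurableSet W) (hpos : (P.prod P) W ≠ 0)
    (hWF : W ⊆ slice F m m') (n n' : ℤ) :
    ∃ a : ℕ, 0 < a ∧ (P.prod P) (W ∩ slice F (m - (a * A + n)) (m' - (a * B + n'))) ≠ 0 := by
  obtain ⟨k, ⟨a, i, j, i', j', ha, h1, h2⟩, hk⟩ :=
    ((hg n n').and_eventually (eventually_digit_translate_pos hW hpos)).exists
  refine ⟨a, ha, fun h0 => hk j j' (i - j) (i' - j') (measure_mono_null ?_ h0)⟩
  rintro ⟨z, z'⟩ ⟨hz, hzj, hzj', hz'⟩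
  refine ⟨hz, ?_⟩
  have h3 := hWF hz'
  simp only at hzj hzj'
  have e1 := pt_add_single hc (m - (a * A + n)) z k (i - j)
  have e2 := pt_add_single hc (m' - (a * B + n')) z' k (i' - j')
  rw [hzj, add_sub_cancel, show m - (a * A + n) - (c k i - c k j) = m by rw [← h1]; ring] at e1
  rw [hzj', add_sub_cancel, show m' - (a * B + n') - (c k i' - c k j') = m' by rw [← h2]; ring] at e2
  change (pt c _ z, pt c _ z') ∈ F
  rw [e1, e2]
  exact h3

/-- `f` acts as translation of heights by `(A, B)`. -/
def IsTransl (f : Sp c × Sp c → Sp c × Sp c) (A B : ℤ) : Prop :=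
  ∀ m m' x x', f (pt c m x, pt c m' x') = (pt c (m + A) x, pt c (m' + B) x')

theorem IsTransl.iterate {f : Sp c × Sp c → Sp c × Sp c} {A B : ℤ} (hf : IsTransl f A B) (n : ℕ) :
    IsTransl f^[n] (n * A) (n * B) := by
  induction n with
  | zero => intro m m' x x'; simp
  | succ n ih =>
    intro m m' x x'
    rw [Function.iterate_succ_apply', ih, hf]
    congr 2 <;> (push_cast; ring)

theorem IsTransl.slice_preimage {f : Sp c × Sp c → Sp c × Sp c} {A B : ℤ} (hf : IsTransl f A B)
    (F : Set (Sp c × Sp c)) (m m' : ℤ) : slice (f ⁻¹' F) m m' = slice F (m + A) (m' + B) := by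
  ext w
  change f _ ∈ F ↔ _
  rw [hf]
  rfl

theorem Good.conservative (hc : FreeDigits c) {A B : ℤ} (hg : Good c A B)
    {f : Sp c × Sp c → Sp c × Sp c} (hf : IsTransl f A B) :
    IsConservativeMap ((mu c).prod (mu c)) f := by
  intro E hE hpos
  obtain ⟨m, m', hm⟩ := exists_slice_ne_zero hc hE hpos.ne'
  obtain ⟨a, ha, h⟩ := hg.transfer hc (measurableSet_slice hc hE m m') hm subset_rfl 0 0
  refine ⟨a, ha, pos_iff_ne_zero.2 fun h0 => h ?_⟩
  have h1 := slice_null hc h0 (m - (a * A + 0)) (m' - (a * B + 0))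
  convert h1 using 2
  have h2 := (hf.iterate a).slice_preimage E (m - (a * A + 0)) (m' - (a * B + 0))
  change _ = slice (f^[a] ⁻¹' E) _ _ ∩ slice E _ _
  rw [h2]
  congr 2 <;> ring

/-- The union of all slices is invariant under all pairs of finite digit changes, hence conull. -/
theorem ae_exists_slice (hc : FreeDigits c) {F : Set (Sp c × Sp c)} (hF : MeasurableSet F)
    (h : ((mu c).prod (mu c)) F ≠ 0) : (P.prod P) (⋃ m, ⋃ m', slice F m m')ᶜ = 0 := by
  obtain ⟨m₀, m₀', h0⟩ := exists_slice_ne_zero hc hF h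
  have hD : Dense (Set.range fun γ : Gm × Gm => ((γ.1 : Om), (γ.2 : Om))) := by
    have h1 : DenseRange (fun γ : Gm => (γ : Om)) := by
      intro x
      refine mem_closure_of_tendsto (f := fun n : ℕ => ((Finsupp.onFinset (Finset.range n)
        (fun k => if k < n then x k else 0) (by simp +contextual) : Gm) : Om)) (b := atTop) ?_
        (Eventually.of_forall fun n => ⟨_, rfl⟩)
      rw [tendsto_pi_nhds]
      intro k
      refine tendsto_const_nhds.congr' ?_
      filter_upwards [eventually_gt_atTop k] with n hn
      simp [hn]
    exact h1.prodMap h1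
  refine (null_or_conull_of_dense (P.prod P) (s := ⋃ m, ⋃ m', slice F m m')
    (MeasurableSet.iUnion fun m => MeasurableSet.iUnion fun m' => measurableSet_slice hc hF m m')
    hD ?_).resolve_left fun h1 => h0 (measure_mono_null
      (Set.subset_iUnion₂ (s := fun m m' => slice F m m') m₀ m₀') h1)
  have key : ∀ (γ γ' : Gm) (w : Om × Om), w ∈ (⋃ m, ⋃ m', slice F m m') →
      ((γ : Om), (γ' : Om)) + w ∈ (⋃ m, ⋃ m', slice F m m') := by
    rintro γ γ' ⟨x, x'⟩ hw
    simp only [Set.mem_iUnion] at hw ⊢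
    obtain ⟨m, m', hw⟩ := hw
    refine ⟨m - disp c γ x, m' - disp c γ' x', ?_⟩
    have e1 : pt c (m - disp c γ x) ((γ : Om) + x) = pt c m x :=
      ((pt_eq_pt_iff hc _ _ _ _).2 ⟨γ, add_comm _ _, rfl⟩).symm
    have e2 : pt c (m' - disp c γ' x') ((γ' : Om) + x') = pt c m' x' :=
      ((pt_eq_pt_iff hc _ _ _ _).2 ⟨γ', add_comm _ _, rfl⟩).symm
    change (pt c _ _, pt c _ _) ∈ F
    simp only [Prod.fst_add, Prod.snd_add]
    rw [e1, e2]
    exact hw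
  rintro _ ⟨⟨γ, γ'⟩, rfl⟩ w
  refine ⟨fun h => ?_, key γ γ' w⟩
  have := key (-γ) (-γ') _ h
  rwa [Finsupp.coe_neg, Finsupp.coe_neg, ← Prod.neg_mk, neg_add_cancel_left] at this

theorem Good.ergodic (hc : FreeDigits c) {A B : ℤ} (hg : Good c A B)
    {f : Sp c × Sp c → Sp c × Sp c} (hf : IsTransl f A B)
    (hfm : Measure.QuasiMeasurePreserving f ((mu c).prod (mu c)) ((mu c).prod (mu c))) :
    IsErgodicMap ((mu c).prod (mu c)) f := by
  intro F hF hinv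
  by_contra! hcon
  obtain ⟨h1, h2⟩ := hcon
  obtain ⟨n, n', hn⟩ := exists_slice_ne_zero hc hF.compl h2
  -- some slice of `F` meets the slice of `Fᶜ` at heights `n, n'`
  obtain ⟨m, m', hm⟩ : ∃ m m', (P.prod P) (slice Fᶜ n n' ∩ slice F m m') ≠ 0 := by
    by_contra! hall
    apply hn
    refine measure_mono_null ?_ (measure_union_null
      (measure_iUnion_null fun m => measure_iUnion_null fun m' => hall m m')
      (ae_exists_slice hc hF h1))
    intro w hw
    by_cases hw' : w ∈ ⋃ m, ⋃ m', slice F m m'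
    · left
      simp only [Set.mem_iUnion] at hw' ⊢
      obtain ⟨m, m', h⟩ := hw'
      exact ⟨m, m', hw, h⟩
    · exact Or.inr hw'
  obtain ⟨a, -, ha⟩ := hg.transfer hc ((measurableSet_slice hc hF.compl n n').inter
    (measurableSet_slice hc hF m m')) hm Set.inter_subset_right (m - n) (m' - n')
  -- `F` is invariant under `f^[a]` up to a null set, so the slices cannot overlap
  have hiter : f^[a] ⁻¹' F =ᵐ[(mu c).prod (mu c)] F :=
    hfm.preimage_iterate_ae_eq a (measure_symmDiff_eq_zero_iff.1 hinv)
  apply ha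
  have h3 := slice_null hc (measure_symmDiff_eq_zero_iff.2 hiter) (m - (a * A + (m - n)))
    (m' - (a * B + (m' - n')))
  refine measure_mono_null ?_ h3
  rintro ⟨z, z'⟩ ⟨⟨hz, -⟩, hz'⟩
  right
  refine ⟨hz', fun hz'' => hz ?_⟩
  have h4 : ((z, z') : Om × Om) ∈ slice (f^[a] ⁻¹' F) _ _ := hz''
  rw [(hf.iterate a).slice_preimage,
    show m - (a * A + (m - n)) + a * A = n by ring,
    show m' - (a * B + (m' - n')) + a * B = n' by ring] at h4
  exact h4

/-! ### Non-ergodicity of products -/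

/-- The cylinder of sequences whose first `K` digits vanish. -/
def cyl (K : ℕ) : Set Om := {x | ∀ k < K, x k = 0}

theorem isOpen_cyl (K : ℕ) : IsOpen (cyl K) := by
  have : cyl K = ⋂ k ∈ Finset.range K, (fun x : Om => x k) ⁻¹' {0} := by
    ext x; simp [cyl]
  rw [this]
  exact isOpen_biInter_finset fun k _ => (isOpen_discrete _).preimage (continuous_apply k)

theorem pt_injective (hc : FreeDigits c) (m : ℤ) : Function.Injective (pt c m) := by
  intro x y h
  obtain ⟨γ, h1, h2⟩ := (pt_eq_pt_iff hc _ _ _ _).1 h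
  have : γ = 0 := hc γ x (by omega)
  simp [h1, this]

theorem pt_up (hc : FreeDigits c) (m n : ℤ) (x : Om) :
    proj (up n (pt c m x : Cov c)) = pt c (m + n) x := by
  unfold pt
  rw [proj_up_proj hc, up_mkc]

theorem prod_prod_ne_zero_of_isOpen {U : Set Om} (hU : IsOpen U) (hne : U.Nonempty) :
    (P.prod P) (U ×ˢ U) ≠ 0 := by
  rw [Measure.prod_prod]
  exact mul_ne_zero (hU.measure_ne_zero P hne) (hU.measure_ne_zero P hne)

/-- Among digit changes that involve only indices `≥ K`, only `γ = 0` has a displacement whose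
`B`-fold is `A` times another displacement. -/
def Separated (c : ℕ → ZMod 4 → ℤ) (A B : ℤ) (K : ℕ) : Prop :=
  ∀ (γ γ' : Gm) (x x' : Om), (∀ k < K, γ k = 0) → (∀ k < K, γ' k = 0) →
    B * disp c γ x = A * disp c γ' x' → γ = 0

/-- The saturation of the square of the cylinder `cyl (K + 1)` at height `0` is invariant and misses
the square of the cylinder `{x | x ∈ cyl K, x K = 1}` at height `0`. -/
theorem Separated.not_ergodic (hc : FreeDigits c) {A B : ℤ} {K : ℕ} (hs : Separated c A B K)
    {f : Sp c × Sp c → Sp c × Sp c} (hf : IsTransl f A B) :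
    ¬ IsErgodicMap ((mu c).prod (mu c)) f := by
  intro herg
  set Q : Set (Sp c) := pt c 0 '' cyl (K + 1) with hQ
  have hQm : MeasurableSet Q := (isOpen_cyl _).measurableSet.image_of_measurable_injOn
    (measurable_pt hc 0) (pt_injective hc 0).injOn
  -- the saturation of `Q × Q` under the powers of `f`
  set F : Set (Sp c × Sp c) := ⋃ n : ℤ,
    {w | proj (up (n * A) (w.1 : Cov c)) ∈ Q ∧ proj (up (n * B) (w.2 : Cov c)) ∈ Q} with hF
  have hpu : ∀ n : ℤ, Measurable fun u : Sp c => proj (up n (u : Cov c)) := fun n =>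
    (measurable_proj hc).comp ((measurePreserving_up n).measurable.comp measurable_subtype_coe)
  have hFm : MeasurableSet F := MeasurableSet.iUnion fun n =>
    (hQm.preimage ((hpu _).comp measurable_fst)).inter (hQm.preimage ((hpu _).comp measurable_snd))
  have memF : ∀ m m' x x', (pt c m x, pt c m' x') ∈ F ↔
      ∃ n : ℤ, pt c (m + n * A) x ∈ Q ∧ pt c (m' + n * B) x' ∈ Q := by
    intro m m' x x'
    rw [hF, Set.mem_iUnion]
    refine exists_congr fun n => ?_
    rw [← pt_up hc, ← pt_up hc]
    rfl
  have hinv : f ⁻¹' F = F := by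
    ext ⟨w, w'⟩
    obtain ⟨m, x, rfl⟩ := exists_pt hc w
    obtain ⟨m', x', rfl⟩ := exists_pt hc w'
    rw [Set.mem_preimage, hf, memF, memF]
    constructor
    · rintro ⟨n, h1, h2⟩
      refine ⟨n + 1, ?_, ?_⟩
      · convert h1 using 2; ring
      · convert h2 using 2; ring
    · rintro ⟨n, h1, h2⟩
      refine ⟨n - 1, ?_, ?_⟩
      · convert h1 using 2; ring
      · convert h2 using 2; ring
  rcases herg F hFm (by rw [hinv]; simp) with h | h
  · refine prod_prod_ne_zero_of_isOpen (isOpen_cyl (K + 1)) ⟨0, fun _ _ => rfl⟩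
      (measure_mono_null ?_ (slice_null hc h 0 0))
    rintro ⟨x, x'⟩ ⟨hx, hx'⟩
    refine (memF _ _ _ _).2 ⟨0, ?_, ?_⟩
    · exact ⟨x, hx, by simp⟩
    · exact ⟨x', hx', by simp⟩
  · have hO : IsOpen (cyl K ∩ (fun x : Om => x K) ⁻¹' {1}) :=
      (isOpen_cyl K).inter ((isOpen_discrete _).preimage (continuous_apply K))
    refine prod_prod_ne_zero_of_isOpen hO ⟨Pi.single K 1, fun k hk => ?_, ?_⟩
      (measure_mono_null ?_ (slice_null hc h 0 0))
    · simp [hk.ne]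
    · simp
    rintro ⟨x, x'⟩ ⟨⟨hx, hxK⟩, ⟨hx', -⟩⟩ hmem
    change x ∈ cyl K at hx
    change x' ∈ cyl K at hx'
    obtain ⟨n, ⟨y, hy, hxy⟩, ⟨y', hy', hxy'⟩⟩ := (memF _ _ _ _).1 hmem
    obtain ⟨γ, h1, h2⟩ := (pt_eq_pt_iff hc _ _ _ _).1 hxy
    obtain ⟨γ', h1', h2'⟩ := (pt_eq_pt_iff hc _ _ _ _).1 hxy'
    have hγ : γ = 0 := by
      refine hs γ γ' y y' (fun k hk => ?_) (fun k hk => ?_) ?_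
      · have := congrFun h1 k
        simp only [Pi.add_apply] at this
        rw [hx k hk, hy k (hk.trans (Nat.lt_succ_self K)), zero_add] at this
        exact this.symm
      · have := congrFun h1' k
        simp only [Pi.add_apply] at this
        rw [hx' k hk, hy' k (hk.trans (Nat.lt_succ_self K)), zero_add] at this
        exact this.symm
      · linear_combination B * h2 - A * h2'
    have h3 := congrFun h1 K
    rw [hγ] at h3
    simp only [Finsupp.coe_zero, add_zero] at h3
    rw [hy K (Nat.lt_succ_self K)] at h3
    have h4 : x K = 1 := hxK
    rw [h4] at h3
    exact absurd h3 (by decide)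

/-! ### Infinite measure -/

/-- If no displacement equals a difference of two terms of `m`, then the preimages of the level of
height `0` under the powers `T ^ (m i)` are disjoint sets of equal positive measure. -/
theorem mu_univ_eq_top (hc : FreeDigits c) (m : ℕ → ℕ)
    (hm : ∀ i j, j < i → ∀ γ x, |disp c γ x| ≠ |(m i : ℤ) - m j|) : mu c Set.univ = ⊤ := by
  set A : Set (Sp c) := Set.range (pt c 0) with hA
  have hAm : MeasurableSet A := by
    rw [hA, ← Set.image_univ]
    exact MeasurableSet.univ.image_of_measurable_injOn (measurable_pt hc 0)
      (pt_injective hc 0).injOn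
  have hA0 : mu c A ≠ 0 := by
    intro h
    have := (quasiMeasurePreserving_pt hc 0).preimage_null h
    rw [hA, Set.preimage_range] at this
    simp at this
  set S : ℕ → Set (Sp c) := fun i => (shiftMap hc)^[m i] ⁻¹' A with hS
  have hSm : ∀ i, MeasurableSet (S i) := fun i =>
    hAm.preimage ((measurePreserving_shiftMap hc).iterate (m i)).measurable
  have hSμ : ∀ i, mu c (S i) = mu c A := fun i =>
    ((measurePreserving_shiftMap hc).iterate (m i)).measure_preimage hAm.nullMeasurableSet
  have hlt : ∀ i j, j < i → Disjoint (S i) (S j) := by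
    intro i j hij
    refine Set.disjoint_left.2 fun u hu hu' => ?_
    obtain ⟨n, z, rfl⟩ := exists_pt hc u
    obtain ⟨x, hx⟩ := hu
    obtain ⟨y, hy⟩ := hu'
    have key : ∀ (l : ℕ) (v : Om), pt c 0 v = (shiftMap hc)^[l] (pt c n z) →
        pt c n z = pt c (-(l : ℤ)) v := by
      intro l v h
      refine ((shiftMap hc).injective.iterate l) ?_
      rw [← h, pt, pt, shiftMap_iterate_proj hc, neg_add_cancel]
    have h := (key _ _ hx).symm.trans (key _ _ hy)
    obtain ⟨γ, -, h2⟩ := (pt_eq_pt_iff hc _ _ _ _).1 h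
    refine hm i j hij γ x ?_
    rw [abs_sub_comm, show disp c γ x = (m j : ℤ) - m i by linear_combination h2]
  have hdisj : Pairwise (Function.onFun Disjoint S) := by
    intro i j hij
    rcases lt_or_gt_of_ne hij with h | h
    · exact (hlt j i h).symm
    · exact hlt i j h
  have h1 := measure_iUnion (μ := mu c) hdisj hSm
  simp only [hSμ, ENNReal.tsum_const_eq_top_of_ne_zero hA0] at h1
  exact top_unique (h1 ▸ measure_mono (Set.subset_univ _))

/-! ### Choice of the digits -/

/-- Quadruples `(p, q, s, t)` with `p / q ∈ R` can be listed with infinitely many repetitions;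
stages with nothing to do get the ratio `1`. -/
theorem exists_prm (R : Set ℚ) : ∃ v : ℕ → ℕ × ℕ × ℤ × ℤ,
    (∀ k, 0 < (v k).1 ∧ (v k).1 ≤ (v k).2.1 ∧
      (((v k).1 : ℚ) / (v k).2.1 ∈ R ∨ (v k).1 = (v k).2.1)) ∧
    ∀ p q : ℕ, 0 < p → p < q → (p : ℚ) / q ∈ R → ∀ s t : ℤ, ∃ᶠ k in atTop, v k = (p, q, s, t) := by
  classical
  obtain ⟨e, he⟩ := exists_surjective_nat (ℕ × ℕ × ℤ × ℤ)
  refine ⟨fun k => if 0 < (e k.unpair.1).1 ∧ (e k.unpair.1).1 < (e k.unpair.1).2.1 ∧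
    ((e k.unpair.1).1 : ℚ) / (e k.unpair.1).2.1 ∈ R then e k.unpair.1 else (1, 1, 0, 0), ?_, ?_⟩
  · intro k
    dsimp only
    split_ifs with h
    · exact ⟨h.1, h.2.1.le, Or.inl h.2.2⟩
    · simp
  · intro p q hp hpq h s t
    obtain ⟨n, hn⟩ := he (p, q, s, t)
    -- only the first component of `Nat.unpair k` matters, so the second one makes `k` large
    refine frequently_atTop.2 fun N => ⟨Nat.pair n N, Nat.right_le_pair _ _, ?_⟩
    simp [hn, hp, hpq, h]

/-- The parameters `(p, q, s, t)` of stage `k`. -/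
noncomputable def prm (R : Set ℚ) : ℕ → ℕ × ℕ × ℤ × ℤ := (exists_prm R).choose

theorem prm_spec (R : Set ℚ) (k : ℕ) : 0 < (prm R k).1 ∧ (prm R k).1 ≤ (prm R k).2.1 ∧
    (((prm R k).1 : ℚ) / (prm R k).2.1 ∈ R ∨ (prm R k).1 = (prm R k).2.1) :=
  (exists_prm R).choose_spec.1 k

theorem frequently_prm {R : Set ℚ} {p q : ℕ} (hp : 0 < p) (hpq : p < q) (h : (p : ℚ) / q ∈ R)
    (s t : ℤ) : ∃ᶠ k in atTop, prm R k = (p, q, s, t) :=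
  (exists_prm R).choose_spec.2 p q hp hpq h s t

/-- The size of the perturbation `(s, t)` in a quadruple of parameters. -/
def wt (v : ℕ × ℕ × ℤ × ℤ) : ℕ := v.2.2.1.natAbs + v.2.2.2.natAbs

/-- The small scale at stage `k`, when all displacements of earlier stages are at most `M`. -/
def scA (k M : ℕ) (v : ℕ × ℕ × ℤ × ℤ) : ℕ := 4 * (k + 1) * (M + wt v + 2)

/-- The large scale at stage `k`, when all displacements of earlier stages are at most `M`. -/
def scB (k M : ℕ) (v : ℕ × ℕ × ℤ × ℤ) : ℕ := 4 * (k + 1) * (M + wt v + 2 + scA k M v * v.2.1)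

/-- `tot R k` bounds all displacements that involve only the digits of index below `k`. -/
noncomputable def tot (R : Set ℚ) : ℕ → ℕ
  | 0 => 0
  | k + 1 => tot R k + (scB k (tot R k) (prm R k) + scA k (tot R k) (prm R k) * (prm R k).2.1 +
      wt (prm R k))

/-- The four digit values `0`, `a p + s`, `B`, `B + a q + t`. -/
def dig (a B : ℤ) (v : ℕ × ℕ × ℤ × ℤ) (i : ZMod 4) : ℤ :=
  if i = 0 then 0 else if i = 1 then a * v.1 + v.2.2.1 else if i = 2 then B
    else B + (a * v.2.1 + v.2.2.2)

theorem dig_zero (a B : ℤ) (v) : dig a B v 0 = 0 := rfl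
theorem dig_one (a B : ℤ) (v) : dig a B v 1 = a * v.1 + v.2.2.1 := rfl
theorem dig_two (a B : ℤ) (v) : dig a B v 2 = B := rfl
theorem dig_three (a B : ℤ) (v) : dig a B v 3 = B + (a * v.2.1 + v.2.2.2) := rfl

/-- The digit function attached to `R`: at each stage, the four digit values for the parameters
`prm R k` and for scales that dominate all earlier stages. -/
noncomputable def dgt (R : Set ℚ) (k : ℕ) (i : ZMod 4) : ℤ :=
  dig (scA k (tot R k) (prm R k)) (scB k (tot R k) (prm R k)) (prm R k) i

/-- A difference of two digit values is `B β + r` with `β ∈ {-1, 0, 1}` and `r` much smaller than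
`B`; when `β = 0`, it is `a u + w` with `u ∈ {0, ±p, ±q}` and `w` much smaller than `a`. -/
theorem dig_sub (a B : ℤ) (ha : 0 ≤ a) (v : ℕ × ℕ × ℤ × ℤ) (hv : 0 < v.1) (hv' : v.1 ≤ v.2.1)
    (i j : ZMod 4) :
    ∃ β r : ℤ, dig a B v i - dig a B v j = B * β + r ∧ |r| ≤ a * v.2.1 + wt v ∧
      (β = 0 ∨ β = 1 ∨ β = -1) ∧
      (β = 0 → ∃ u w : ℤ, r = a * u + w ∧ |w| ≤ wt v ∧
        (u = 0 ∨ u = v.1 ∨ u = -v.1 ∨ u = v.2.1 ∨ u = -v.2.1) ∧ (i ≠ j → u ≠ 0)) := by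
  obtain ⟨p, q, s, t⟩ := v
  simp only [wt] at hv hv' ⊢
  have hp : (0 : ℤ) < p := by exact_mod_cast hv
  have hpq : (p : ℤ) ≤ q := by exact_mod_cast hv'
  have h1 : 0 ≤ a * p := by positivity
  have h2 : a * p ≤ a * q := mul_le_mul_of_nonneg_left hpq ha
  have hall : ∀ i : ZMod 4, i = 0 ∨ i = 1 ∨ i = 2 ∨ i = 3 := by decide
  have hb : ∀ r : ℤ, -(a * q + (s.natAbs + t.natAbs : ℕ)) ≤ r →
      r ≤ a * q + (s.natAbs + t.natAbs : ℕ) → |r| ≤ a * q + (s.natAbs + t.natAbs : ℕ) :=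
    fun r h h' => abs_le.2 ⟨h, h'⟩
  have hw : ∀ r : ℤ, -((s.natAbs + t.natAbs : ℕ) : ℤ) ≤ r →
      r ≤ (s.natAbs + t.natAbs : ℕ) → |r| ≤ (s.natAbs + t.natAbs : ℕ) :=
    fun r h h' => abs_le.2 ⟨h, h'⟩
  rcases hall i with rfl | rfl | rfl | rfl <;> rcases hall j with rfl | rfl | rfl | rfl <;>
    simp only [dig_zero, dig_one, dig_two, dig_three]
  · exact ⟨0, 0, by ring, hb _ (by omega) (by omega), by simp, fun _ =>
      ⟨0, 0, by ring, hw _ (by omega) (by omega), by simp, by simp⟩⟩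
  · exact ⟨0, -(a * p) - s, by ring, hb _ (by omega) (by omega), by simp, fun _ =>
      ⟨-p, -s, by ring, hw _ (by omega) (by omega), by simp, fun _ => by omega⟩⟩
  · exact ⟨-1, 0, by ring, hb _ (by omega) (by omega), by simp, fun h => by simp at h⟩
  · exact ⟨-1, -(a * q) - t, by ring, hb _ (by omega) (by omega), by simp, fun h => by simp at h⟩
  · exact ⟨0, a * p + s, by ring, hb _ (by omega) (by omega), by simp, fun _ =>
      ⟨p, s, by ring, hw _ (by omega) (by omega), by simp, fun _ => by omega⟩⟩
  · exact ⟨0, 0, by ring, hb _ (by omega) (by omega), by simp, fun _ =>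
      ⟨0, 0, by ring, hw _ (by omega) (by omega), by simp, by simp⟩⟩
  · exact ⟨-1, a * p + s, by ring, hb _ (by omega) (by omega), by simp, fun h => by simp at h⟩
  · exact ⟨-1, a * p + s - (a * q) - t, by ring, hb _ (by omega) (by omega), by simp,
      fun h => by simp at h⟩
  · exact ⟨1, 0, by ring, hb _ (by omega) (by omega), by simp, fun h => by simp at h⟩
  · exact ⟨1, -(a * p) - s, by ring, hb _ (by omega) (by omega), by simp, fun h => by simp at h⟩
  · exact ⟨0, 0, by ring, hb _ (by omega) (by omega), by simp, fun _ =>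
      ⟨0, 0, by ring, hw _ (by omega) (by omega), by simp, by simp⟩⟩
  · exact ⟨0, -(a * q) - t, by ring, hb _ (by omega) (by omega), by simp, fun _ =>
      ⟨-q, -t, by ring, hw _ (by omega) (by omega), by simp, fun _ => by omega⟩⟩
  · exact ⟨1, a * q + t, by ring, hb _ (by omega) (by omega), by simp, fun h => by simp at h⟩
  · exact ⟨1, a * q + t - (a * p) - s, by ring, hb _ (by omega) (by omega), by simp,
      fun h => by simp at h⟩
  · exact ⟨0, a * q + t, by ring, hb _ (by omega) (by omega), by simp, fun _ =>
      ⟨q, t, by ring, hw _ (by omega) (by omega), by simp, fun _ => by omega⟩⟩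
  · exact ⟨0, 0, by ring, hb _ (by omega) (by omega), by simp, fun _ =>
      ⟨0, 0, by ring, hw _ (by omega) (by omega), by simp, by simp⟩⟩

theorem abs_mul_add_ge {B b r : ℤ} (hB : 0 ≤ B) (hb : b ≠ 0) : B - |r| ≤ |B * b + r| := by
  have h1 : B ≤ |B * b| := by
    rw [abs_mul, abs_of_nonneg hB]
    nlinarith [Int.one_le_abs hb]
  have h2 := abs_sub_abs_le_abs_sub (B * b) (-r)
  rw [abs_neg, sub_neg_eq_add] at h2
  linarith

theorem dgt_sub_le (R : Set ℚ) (k : ℕ) (i j : ZMod 4) :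
    |dgt R k i - dgt R k j| ≤ tot R (k + 1) - tot R k := by
  obtain ⟨h1, h2, -⟩ := prm_spec R k
  obtain ⟨β, r, h, hr, hβ, -⟩ := dig_sub (scA k (tot R k) (prm R k))
    (scB k (tot R k) (prm R k)) (by positivity) (prm R k) h1 h2 i j
  rw [dgt, dgt, h]
  have h3 : |(scB k (tot R k) (prm R k) : ℤ) * β| ≤ scB k (tot R k) (prm R k) := by
    rcases hβ with rfl | rfl | rfl <;> simp
  refine (abs_add_le _ _).trans ?_
  rw [tot]
  push_cast
  linarith

theorem lt_dgt_sub (R : Set ℚ) (k : ℕ) {i j : ZMod 4} (hij : i ≠ j) :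
    4 * ((tot R k : ℤ) + 1) < |dgt R k i - dgt R k j| := by
  obtain ⟨h1, h2, -⟩ := prm_spec R k
  obtain ⟨β, r, h, hr, hβ, hβ0⟩ := dig_sub (scA k (tot R k) (prm R k))
    (scB k (tot R k) (prm R k)) (by positivity) (prm R k) h1 h2 i j
  rw [dgt, dgt, h]
  set M := tot R k
  set v := prm R k
  set a := scA k M v with ha
  set B := scB k M v with hB
  have ha' : M + wt v + 2 ≤ a / 4 := by
    rw [ha, scA, mul_assoc, Nat.mul_div_cancel_left _ (by norm_num)]
    exact Nat.le_mul_of_pos_left _ (Nat.succ_pos k)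
  have hB' : M + wt v + 2 + a * v.2.1 ≤ B / 4 := by
    rw [hB, scB, mul_assoc, Nat.mul_div_cancel_left _ (by norm_num)]
    exact Nat.le_mul_of_pos_left _ (Nat.succ_pos k)
  have ha4 : 4 * ((M : ℤ) + wt v + 2) ≤ a := by omega
  have hB4 : 4 * ((M : ℤ) + wt v + 2 + a * v.2.1) ≤ B := by
    have : 4 * (M + wt v + 2 + a * v.2.1) ≤ B := by omega
    exact_mod_cast this
  have haq : (0 : ℤ) ≤ a * v.2.1 := by positivity
  by_cases hb : β = 0
  · obtain ⟨u, w, rfl, hw, -, hu⟩ := hβ0 hb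
    have := abs_mul_add_ge (r := w) (Int.natCast_nonneg a) (hu hij)
    rw [hb, mul_zero, zero_add]
    linarith
  · have := abs_mul_add_ge (r := r) (Int.natCast_nonneg B) hb
    linarith

/-- The leading coefficient of a combination of digit differences does not vanish, when
`p' / q' < 1` is not `p / q`. -/
theorem comb_ne_zero {p q p' q' u u' : ℤ} (hp : 0 < p) (hpq : p ≤ q) (hp' : 0 < p')
    (hpq' : p' < q') (hne : p' * q ≠ q' * p)
    (hu : u = 0 ∨ u = p ∨ u = -p ∨ u = q ∨ u = -q)
    (hu' : u' = 0 ∨ u' = p ∨ u' = -p ∨ u' = q ∨ u' = -q) (h0 : u ≠ 0 ∨ u' ≠ 0) :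
    q' * u - p' * u' ≠ 0 := by
  have hq : 0 < q := hp.trans_le hpq
  have e1 : p' * p < q' * p := by gcongr
  have e2 : p' * q < q' * q := by gcongr
  have e3 : p' * p ≤ p' * q := by gcongr
  have e4 : 0 < p' * p := by positivity
  rcases hu with rfl | rfl | rfl | rfl | rfl <;>
    rcases hu' with rfl | rfl | rfl | rfl | rfl <;>
    first
    | (simp at h0; done)
    | (intro h; linarith)
    | (intro h; exact hne (by linarith))

/-- If `p' / q' < 1` differs from the ratio used at stage `k` then the combinations
`q' x - p' x'` of digit differences of that stage dominate everything that precedes them. -/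
theorem lt_dgt_comb (R : Set ℚ) (k : ℕ) {p' q' : ℕ} (hp' : 0 < p') (hpq' : p' < q')
    (hk : q' ≤ k + 1) (hne : p' * (prm R k).2.1 ≠ q' * (prm R k).1) {i j i' j' : ZMod 4}
    (hij : i ≠ j ∨ i' ≠ j') :
    2 * ((k : ℤ) + 1) * tot R k <
      |q' * (dgt R k i - dgt R k j) - p' * (dgt R k i' - dgt R k j')| := by
  obtain ⟨h1, h2, -⟩ := prm_spec R k
  obtain ⟨β, r, h, hr, hβ, hβ0⟩ := dig_sub (scA k (tot R k) (prm R k))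
    (scB k (tot R k) (prm R k)) (by positivity) (prm R k) h1 h2 i j
  obtain ⟨β', r', h', hr', hβ', hβ0'⟩ := dig_sub (scA k (tot R k) (prm R k))
    (scB k (tot R k) (prm R k)) (by positivity) (prm R k) h1 h2 i' j'
  rw [dgt, dgt, dgt, dgt, h, h']
  set M := tot R k
  set v := prm R k
  set a := scA k M v with ha
  set B := scB k M v with hB
  have ha4 : (a : ℤ) = 4 * (k + 1) * (M + wt v + 2) := by rw [ha, scA]; push_cast; ring
  have hB4 : (B : ℤ) = 4 * (k + 1) * (M + wt v + 2 + a * v.2.1) := by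
    rw [hB, scB, ← ha]; push_cast; ring
  have haq : (0 : ℤ) ≤ a * v.2.1 := by positivity
  have hp : (0 : ℤ) < p' := by exact_mod_cast hp'
  have hpq : (p' : ℤ) < q' := by exact_mod_cast hpq'
  have hqk : (q' : ℤ) ≤ k + 1 := by exact_mod_cast hk
  have hv1 : (0 : ℤ) < v.1 := by exact_mod_cast h1
  have hv2 : (v.1 : ℤ) ≤ v.2.1 := by exact_mod_cast h2
  -- a combination of two errors of size `ρ` has size at most `2 (k + 1) ρ`
  have hcomb : ∀ y y' ρ : ℤ, |y| ≤ ρ → |y'| ≤ ρ → |q' * y - p' * y'| ≤ 2 * (k + 1) * ρ := by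
    intro y y' ρ hy hy'
    have hρ : 0 ≤ ρ := (abs_nonneg y).trans hy
    refine (abs_sub _ _).trans ?_
    rw [abs_mul, abs_mul, Nat.abs_cast, Nat.abs_cast]
    have e1 : (q' : ℤ) * |y| ≤ (k + 1) * ρ := by gcongr
    have e2 : (p' : ℤ) * |y'| ≤ (k + 1) * ρ := by gcongr; omega
    linarith
  have hk0 : (0 : ℤ) ≤ k := by positivity
  have hM0 : (0 : ℤ) ≤ M := by positivity
  have hw0 : (0 : ℤ) ≤ wt v := by positivity
  by_cases hb : β = 0 ∧ β' = 0
  · obtain ⟨u, w, rfl, hw, hu, hu0⟩ := hβ0 hb.1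
    obtain ⟨u', w', rfl, hw', hu', hu0'⟩ := hβ0' hb.2
    have hne' : (p' : ℤ) * v.2.1 ≠ q' * v.1 := by exact_mod_cast hne
    have hcoef : (q' : ℤ) * u - p' * u' ≠ 0 :=
      comb_ne_zero hv1 hv2 hp hpq hne' hu hu' (hij.imp hu0 hu0')
    have := abs_mul_add_ge (r := q' * w - p' * w') (Int.natCast_nonneg a) hcoef
    have e := hcomb w w' _ hw hw'
    rw [hb.1, hb.2, show (q' : ℤ) * (B * 0 + (a * u + w)) - p' * (B * 0 + (a * u' + w')) =
      a * (q' * u - p' * u') + (q' * w - p' * w') by ring]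
    nlinarith
  · have hcoef : (q' : ℤ) * β - p' * β' ≠ 0 := by
      rcases hβ with rfl | rfl | rfl <;> rcases hβ' with rfl | rfl | rfl <;> simp at hb ⊢ <;> omega
    have := abs_mul_add_ge (r := q' * r - p' * r') (Int.natCast_nonneg B) hcoef
    have e := hcomb r r' _ hr hr'
    rw [show (q' : ℤ) * (B * β + r) - p' * (B * β' + r') =
      B * (q' * β - p' * β') + (q' * r - p' * r') by ring]
    nlinarith

theorem tot_mono (R : Set ℚ) : Monotone (tot R) :=
  monotone_nat_of_le_succ fun k => by rw [tot]; omega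

/-- A displacement involving no index above `k` is its `k`-th term up to `tot R k`. -/
theorem disp_split (R : Set ℚ) (γ : Gm) (x : Om) (k : ℕ) (hγ : ∀ j, k < j → γ j = 0) :
    |disp (dgt R) γ x - (dgt R k (x k + γ k) - dgt R k (x k))| ≤ tot R k := by
  have hs : γ.support ⊆ Finset.range (k + 1) := fun j hj => by
    rw [Finset.mem_range]
    by_contra hjk
    exact (Finsupp.mem_support_iff.1 hj) (hγ j (by omega))
  rw [disp_eq_sum _ _ _ hs, Finset.sum_range_succ, add_sub_cancel_right]
  have : ∀ n, |∑ j ∈ Finset.range n, (dgt R j (x j + γ j) - dgt R j (x j))| ≤ tot R n := by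
    intro n
    induction n with
    | zero => simp
    | succ n ih =>
      rw [Finset.sum_range_succ]
      refine (abs_add_le _ _).trans ?_
      have := dgt_sub_le R n (x n + γ n) (x n)
      linarith
  exact this k

theorem exists_top {S : Finset ℕ} (hS : S.Nonempty) : ∃ k ∈ S, ∀ j, k < j → j ∉ S :=
  ⟨S.max' hS, S.max'_mem hS, fun j hj hjS => absurd (S.le_max' j hjS) (by omega)⟩

/-- The absolute displacement of a nonzero `γ` lies in `(3 tot R k + 4, tot R (k + 1)]`, where `k` is
the top index of `γ`. -/
theorem disp_bounds (R : Set ℚ) {γ : Gm} (hγ : γ ≠ 0) (x : Om) :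
    ∃ k, 3 * (tot R k : ℤ) + 4 < |disp (dgt R) γ x| ∧ |disp (dgt R) γ x| ≤ tot R (k + 1) := by
  obtain ⟨k, hk, hk'⟩ := exists_top (Finsupp.support_nonempty_iff.2 hγ)
  have h1 := disp_split R γ x k fun j hj => Finsupp.notMem_support_iff.1 (hk' j hj)
  have h2 := lt_dgt_sub R k (i := x k + γ k) (j := x k)
    (by simpa using Finsupp.mem_support_iff.1 hk)
  have h3 := dgt_sub_le R k (x k + γ k) (x k)
  refine ⟨k, ?_, ?_⟩
  · have := abs_sub_abs_le_abs_sub (dgt R k (x k + γ k) - dgt R k (x k)) (disp (dgt R) γ x)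
    rw [abs_sub_comm _ (disp (dgt R) γ x)] at this
    linarith
  · have := abs_sub_abs_le_abs_sub (disp (dgt R) γ x) (dgt R k (x k + γ k) - dgt R k (x k))
    linarith

theorem freeDigits_dgt (R : Set ℚ) : FreeDigits (dgt R) := by
  intro γ x h
  by_contra hγ
  obtain ⟨k, h1, -⟩ := disp_bounds R hγ x
  rw [h, abs_zero] at h1
  omega

/-- For `j < i` the difference of the terms `2 tot R i + 1` and `2 tot R j + 1` exceeds `tot R i` and
is at most `2 tot R i`, a range that contains no displacement. -/
theorem mu_dgt_univ (R : Set ℚ) : mu (dgt R) Set.univ = ⊤ := by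
  refine mu_univ_eq_top (freeDigits_dgt R) (fun i => 2 * tot R i + 1) fun i j hij γ x h => ?_
  have hstep : ∀ k, 4 * ((tot R k : ℤ) + 1) < tot R (k + 1) - tot R k := fun k =>
    (lt_dgt_sub R k (i := 0) (j := 1) (by decide)).trans_le (dgt_sub_le R k _ _)
  have hji : (tot R (j + 1) : ℤ) ≤ tot R i := by exact_mod_cast tot_mono R hij
  have hj := hstep j
  push_cast at h
  rw [abs_of_nonneg (by linarith : (0 : ℤ) ≤ 2 * tot R i + 1 - (2 * tot R j + 1))] at h
  by_cases hγ : γ = 0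
  · rw [hγ, disp_zero, abs_zero] at h
    linarith
  obtain ⟨k, h1, h2⟩ := disp_bounds R hγ x
  rcases lt_or_ge k i with hk | hk
  · have : (tot R (k + 1) : ℤ) ≤ tot R i := by exact_mod_cast tot_mono R hk
    linarith
  · have : (tot R i : ℤ) ≤ tot R k := by exact_mod_cast tot_mono R hk
    linarith

/-- At the top index where `γ` or its partner is nonzero, the combination of digit differences exceeds
the contribution of all lower indices. -/
theorem separated_dgt {R : Set ℚ} {p q : ℕ} (hp : 0 < p) (hpq : p < q) (h : (p : ℚ) / q ∉ R) :
    Separated (dgt R) p q q := by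
  intro γ γ' x x' h0 h0' heq
  by_contra hγ
  have hne : (γ.support ∪ γ'.support).Nonempty :=
    (Finsupp.support_nonempty_iff.2 hγ).mono Finset.subset_union_left
  obtain ⟨k, hk, hk'⟩ := exists_top hne
  have hk0 : γ k ≠ 0 ∨ γ' k ≠ 0 := by simpa using hk
  have hkq : q ≤ k := by
    by_contra hlt
    rcases hk0 with h1 | h1
    · exact h1 (h0 k (by omega))
    · exact h1 (h0' k (by omega))
  have h1 := disp_split R γ x k fun j hj => by
    have := hk' j hj; simp at this; exact this.1
  have h1' := disp_split R γ' x' k fun j hj => by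
    have := hk' j hj; simp at this; exact this.2
  obtain ⟨g1, g2, g3⟩ := prm_spec R k
  have hratio : p * (prm R k).2.1 ≠ q * (prm R k).1 := by
    intro e
    have hq : (q : ℚ) ≠ 0 := by exact_mod_cast (by omega : q ≠ 0)
    have hq' : ((prm R k).2.1 : ℚ) ≠ 0 := by
      have : 0 < (prm R k).2.1 := by omega
      positivity
    rcases g3 with g3 | g3
    · refine h ?_
      convert g3 using 1
      rw [div_eq_div_iff hq hq']
      have : ((p * (prm R k).2.1 : ℕ) : ℚ) = (q * (prm R k).1 : ℕ) := by rw [e]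
      push_cast at this
      linarith
    · rw [g3] at e
      have := Nat.eq_of_mul_eq_mul_right (by omega) e
      omega
  have h2 := lt_dgt_comb R k hp hpq (by omega) hratio (i := x k + γ k) (j := x k)
    (i' := x' k + γ' k) (j' := x' k) (by simpa using hk0)
  set d := disp (dgt R) γ x
  set d' := disp (dgt R) γ' x'
  set e := dgt R k (x k + γ k) - dgt R k (x k)
  set e' := dgt R k (x' k + γ' k) - dgt R k (x' k)
  have h3 : (q : ℤ) * e - p * e' = p * (d' - e') - q * (d - e) := by linear_combination heq
  have h4 : |(q : ℤ) * e - p * e'| ≤ 2 * ((k : ℤ) + 1) * tot R k := by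
    rw [h3]
    refine (abs_sub _ _).trans ?_
    rw [abs_mul, abs_mul, Nat.abs_cast, Nat.abs_cast]
    have e1 : (q : ℤ) * |d - e| ≤ (k + 1) * tot R k := by gcongr; omega
    have e2 : (p : ℤ) * |d' - e'| ≤ (k + 1) * tot R k := by gcongr; omega
    linarith
  exact absurd h2 (not_lt.2 h4)

theorem good_dgt {R : Set ℚ} {p q : ℕ} (hp : 0 < p) (hpq : p < q) (h : (p : ℚ) / q ∈ R) :
    Good (dgt R) p q := by
  intro n n'
  refine (frequently_prm hp hpq h n n').mono fun k hk =>
    ⟨scA k (tot R k) (prm R k), 0, 1, 2, 3, by rw [scA]; positivity, ?_, ?_⟩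
  · simp only [dgt, dig_zero, dig_one, hk]; ring
  · simp only [dgt, dig_two, dig_three, hk]; ring

theorem good_neg_dgt {R : Set ℚ} {p q : ℕ} (hp : 0 < p) (hpq : p < q) (h : (p : ℚ) / q ∈ R) :
    Good (dgt R) (-p) q := by
  intro n n'
  refine (frequently_prm hp hpq h (-n) n').mono fun k hk =>
    ⟨scA k (tot R k) (prm R k), 1, 0, 2, 3, by rw [scA]; positivity, ?_, ?_⟩
  · simp only [dgt, dig_zero, dig_one, hk]; ring
  · simp only [dgt, dig_two, dig_three, hk]; ring

/-! ### The transformation as a translation of heights -/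

theorem isTransl_iterate (hc : FreeDigits c) (p q : ℕ) :
    IsTransl (fun z : Sp c × Sp c => ((shiftMap hc)^[p] z.1, (shiftMap hc)^[q] z.2)) p q :=
  fun _ _ _ _ => Prod.ext (shiftMap_iterate_proj hc _ _ _) (shiftMap_iterate_proj hc _ _ _)

theorem isTransl_symm_iterate (hc : FreeDigits c) (p q : ℕ) :
    IsTransl (fun z : Sp c × Sp c => ((shiftMap hc).symm^[p] z.1, (shiftMap hc)^[q] z.2)) (-p) q :=
  fun _ _ _ _ => Prod.ext
    ((shiftMap_symm_iterate_proj hc _ _ _).trans (by rw [sub_eq_add_neg]; rfl))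
    (shiftMap_iterate_proj hc _ _ _)

end TowerShift

theorem stmt7 (R : Set ℚ) (hR : R ⊆ {r : ℚ | 0 < r ∧ r < 1}) :
    ∃ (X : Type) (_ : MeasurableSpace X) (_ : StandardBorelSpace X)
      (μ : Measure X) (_ : NoAtoms μ) (_ : SigmaFinite μ) (T : X ≃ᵐ X),
      μ Set.univ = ⊤ ∧ MeasurePreserving T μ μ ∧
      ∀ p q : ℕ, 0 < p → p < q →
        (((p : ℚ) / (q : ℚ) ∈ R →
            IsConservativeMap (μ.prod μ)
              (fun z : X × X => ((⇑T)^[p] z.1, (⇑T)^[q] z.2)) ∧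
            IsErgodicMap (μ.prod μ)
              (fun z : X × X => ((⇑T)^[p] z.1, (⇑T)^[q] z.2)) ∧
            IsConservativeMap (μ.prod μ)
              (fun z : X × X => ((⇑T.symm)^[p] z.1, (⇑T)^[q] z.2)) ∧
            IsErgodicMap (μ.prod μ)
              (fun z : X × X => ((⇑T.symm)^[p] z.1, (⇑T)^[q] z.2))) ∧
         ((p : ℚ) / (q : ℚ) ∉ R →
            ¬ IsErgodicMap (μ.prod μ)
              (fun z : X × X => ((⇑T)^[p] z.1, (⇑T)^[q] z.2)))) := by
  have hc := TowerShift.freeDigits_dgt R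
  have hT := TowerShift.measurePreserving_shiftMap hc
  have hT' : MeasurePreserving (TowerShift.shiftMap hc).symm (TowerShift.mu (TowerShift.dgt R))
    (TowerShift.mu (TowerShift.dgt R)) := hT.symm _
  refine ⟨TowerShift.Sp (TowerShift.dgt R), inferInstance,
    TowerShift.measurableSet_dom.standardBorel, TowerShift.mu (TowerShift.dgt R),
    (inferInstance : NullSingletonClass (TowerShift.mu (TowerShift.dgt R))), inferInstance,
    TowerShift.shiftMap hc, TowerShift.mu_dgt_univ R, hT, fun p q hp hpq => ⟨fun h => ?_, fun h => ?_⟩⟩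
  · have hg := TowerShift.good_dgt hp hpq h
    have hg' := TowerShift.good_neg_dgt hp hpq h
    exact ⟨hg.conservative hc (TowerShift.isTransl_iterate hc p q),
      hg.ergodic hc (TowerShift.isTransl_iterate hc p q)
        ((hT.iterate p).prod (hT.iterate q)).quasiMeasurePreserving,
      hg'.conservative hc (TowerShift.isTransl_symm_iterate hc p q),
      hg'.ergodic hc (TowerShift.isTransl_symm_iterate hc p q)
        ((hT'.iterate p).prod (hT.iterate q)).quasiMeasurePreserving⟩
  · exact (TowerShift.separated_dgt hp hpq h).not_ergodic hc (TowerShift.isTransl_iterate hc p q)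
end
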